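/- arXiv:math/0701391 — 3 statements merged into one kernel-verified Lean document; each statement's English description precedes it below -/
import Mathlib

section
/- If π/4 ≤ α ≤ 78π/180, 83π/180 ≤ β ≤ 97π/180, and the parameter tuple (x₁,y₁,α,x₂,y₂,β) satisfies condition K₂, then μ(x₁,y₁,α,x₂,y₂,β) ≥ (1/6)·((1/2)·cos(α − β + π/12) + cos(α − π/4)). -/
open Real MeasureTheory

noncomputable def pt (x y : ℝ) : EuclideanSpace ℝ (Fin 2) :=
  (WithLp.equiv 2 (Fin 2 → ℝ)).symm ![x, y]

noncomputable def sqVertex (x y a : ℝ) (k : Fin 4) : EuclideanSpace ℝ (Fin 2) :=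
  pt (x + Real.sqrt 2 / 6 * Real.cos (a + ((k : ℕ) : ℝ) * (Real.pi / 2)))
     (y + Real.sqrt 2 / 6 * Real.sin (a + ((k : ℕ) : ℝ) * (Real.pi / 2)))

noncomputable def triVertex (x y b : ℝ) (k : Fin 3) : EuclideanSpace ℝ (Fin 2) :=
  pt (x + Real.sqrt 3 / 6 * Real.cos (b + ((k : ℕ) : ℝ) * (2 * Real.pi / 3)))
     (y + Real.sqrt 3 / 6 * Real.sin (b + ((k : ℕ) : ℝ) * (2 * Real.pi / 3)))

noncomputable def config (x1 y1 a x2 y2 b : ℝ) : Set (EuclideanSpace ℝ (Fin 2)) :=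
  {pt 0 0, pt 1 0} ∪ Set.range (sqVertex x1 y1 a) ∪ Set.range (triVertex x2 y2 b)

noncomputable def area (x1 y1 a x2 y2 b : ℝ) : ℝ :=
  (volume (convexHull ℝ (config x1 y1 a x2 y2 b))).toReal

noncomputable def segEF : Set (EuclideanSpace ℝ (Fin 2)) := segment ℝ (pt 0 0) (pt 1 0)

def K2 (x1 y1 a x2 y2 b : ℝ) : Prop :=
  (∀ p ∈ convexHull ℝ (Set.range (sqVertex x1 y1 a)) ∪
        convexHull ℝ (Set.range (triVertex x2 y2 b)),
      Metric.infDist p segEF ≤ 1 ∧ p 1 ∈ Set.Icc (-0.46 : ℝ) 0.46) ∧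
  (convexHull ℝ (Set.range (sqVertex x1 y1 a)) ∩ segEF).Nonempty ∧
  (convexHull ℝ (Set.range (triVertex x2 y2 b)) ∩ segEF).Nonempty

/-!
Let `K` be a convex region of the plane and `ω` the area form. Adding a segment `[0, v]` to `K`
enlarges its area by at least `|ω (q - p) v|` for all `p`, `q` in `K`: cut `K` along the line
through `p` and `q`, translate one piece by `v`, and insert the parallelogram spanned by `q - p`
and `v` in the gap. If `K` contains a translate of the parallelogram `P` with sides `u` and `v`,
then `K + ε P` lies in a translate of `(1 + ε) K`, so adding the two sides of `ε P` one after the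
other gives `area K + ε (|ω (q - p) u| + |ω (q' - p') v|) ≤ (1 + ε) ^ 2 * area K`. As `ε` tends
to `0`, this becomes `|ω (q - p) u| + |ω (q' - p') v| ≤ 2 * area K`.

The area bound is the case in which `P` is the square, `p'` and `q'` are `E` and `F`, and `p` and
`q` are two vertices of the triangle.
-/

open Module
open scoped Pointwise

section Plane

theorem addHaar_preimage_singleton_linearMap {E : Type*} [NormedAddCommGroup E] [NormedSpace ℝ E]
    [FiniteDimensional ℝ E] [MeasurableSpace E] [BorelSpace E] (μ : Measure E)
    [μ.IsAddHaarMeasure] {f : E →ₗ[ℝ] ℝ} (hf : f ≠ 0) (c : ℝ) : μ (f ⁻¹' {c}) = 0 := by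
  obtain ⟨q, rfl⟩ := LinearMap.surjective hf c
  refine measure_mono_null (t := AffineSubspace.mk' q (LinearMap.ker f)) (fun x hx ↦ ?_)
    (Measure.addHaar_affineSubspace μ _ fun htop ↦ hf ?_)
  · simpa [AffineSubspace.mem_mk', sub_eq_zero] using hx
  · rw [← LinearMap.ker_eq_top, ← AffineSubspace.direction_mk' q (LinearMap.ker f), htop,
      AffineSubspace.direction_top]

theorem measure_inter_preimage_Iic_add_Ioc_add_Ioi {α β : Type*} [MeasurableSpace α]
    [LinearOrder β] [TopologicalSpace β] [ClosedIicTopology β] [MeasurableSpace β]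
    [OpensMeasurableSpace β] (μ : Measure α) {f : α → β} (hf : Measurable f) {c d : β}
    (hcd : c ≤ d) (S : Set α) :
    μ (S ∩ f ⁻¹' Set.Iic c) + μ (S ∩ f ⁻¹' Set.Ioc c d) + μ (S ∩ f ⁻¹' Set.Ioi d) = μ S := by
  have hIic : f ⁻¹' Set.Iic d ∩ f ⁻¹' Set.Iic c = f ⁻¹' Set.Iic c := by
    rw [← Set.preimage_inter, Set.Iic_inter_Iic, inf_eq_right.2 hcd]
  rw [← measure_inter_add_sdiff S (hf measurableSet_Iic : MeasurableSet (f ⁻¹' Set.Iic d)),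
    ← measure_inter_add_sdiff (S ∩ f ⁻¹' Set.Iic d)
      (hf measurableSet_Iic : MeasurableSet (f ⁻¹' Set.Iic c)), Set.inter_assoc, hIic,
    Set.inter_sdiff_assoc, ← Set.preimage_sdiff, Set.Iic_sdiff_Iic, Set.sdiff_eq,
    ← Set.preimage_compl, Set.compl_Iic]

attribute [local instance] FiniteDimensional.of_fact_finrank_eq_two

variable {E : Type*} [NormedAddCommGroup E] [InnerProductSpace ℝ E]
  [Fact (finrank ℝ E = 2)] [MeasurableSpace E] [BorelSpace E] (o : Orientation ℝ E (Fin 2))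

theorem volume_segment_add_segment (p q r s : E) :
    volume (segment ℝ p q + segment ℝ r s) = ENNReal.ofReal |o.areaForm (q - p) (s - r)| := by
  have hparallelepiped : segment ℝ p q + segment ℝ r s =
      (p + r) +ᵥ parallelepiped ![q - p, s - r] := by
    rw [parallelepiped_eq_sum_segment, Fin.sum_univ_two, ← vadd_add_vadd_comm, vadd_segment,
      vadd_segment]
    simp
  rw [hparallelepiped, measure_vadd, ← o.measure_eq_volume, o.areaForm_to_volumeForm,
    AlternatingMap.measure_parallelepiped]

theorem volume_add_areaForm_le_volume_add_segment_of_pos {K : Set E} {p q v : E}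
    (h : segment ℝ p q ⊆ K) (hpos : 0 < o.areaForm (q - p) v) :
    volume K + ENNReal.ofReal (o.areaForm (q - p) v) ≤ volume (K + segment ℝ 0 v) := by
  set S := K + segment ℝ 0 v
  have hKS : K ⊆ S := Set.subset_add_left K (left_mem_segment ℝ 0 v)
  set f : E →ₗ[ℝ] ℝ := o.areaForm (q - p) with hf
  have hfq : f q = f p := by rw [← sub_eq_zero, ← map_sub, hf, o.areaForm_apply_self]
  have hf_ne : f ≠ 0 := fun hf0 ↦ hpos.ne' (by rw [hf0, LinearMap.zero_apply])
  have hmeas : Measurable f := f.continuous_of_finiteDimensional.measurable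
  have habove : v +ᵥ (K \ f ⁻¹' Set.Iic (f p)) ⊆ S ∩ f ⁻¹' Set.Ioi (f p + f v) := by
    rintro _ ⟨x, ⟨hxK, hxc⟩, rfl⟩
    change v + x ∈ _
    rw [add_comm v x]
    exact ⟨Set.add_mem_add hxK (right_mem_segment ℝ 0 v), by simpa using hxc⟩
  have hbetween : (segment ℝ p q + segment ℝ 0 v) \ f ⁻¹' {f p} ⊆
      S ∩ f ⁻¹' Set.Ioc (f p) (f p + f v) := by
    rintro _ ⟨⟨x, hx, y, hy, rfl⟩, hne⟩
    have hfx : f x ∈ segment ℝ (f p) (f q) :=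
      image_segment ℝ f.toAffineMap p q ▸ Set.mem_image_of_mem f hx
    have hfy : f y ∈ segment ℝ (f 0) (f v) :=
      image_segment ℝ f.toAffineMap 0 v ▸ Set.mem_image_of_mem f hy
    rw [hfq, segment_same, Set.mem_singleton_iff] at hfx
    rw [map_zero, segment_eq_Icc hpos.le] at hfy
    have hfy0 : f y ≠ 0 := by simpa [hfx] using hne
    refine ⟨Set.add_mem_add (h hx) hy, ?_⟩
    rw [Set.mem_preimage, map_add, hfx]
    exact ⟨lt_add_of_pos_right _ (hfy.1.lt_of_ne' hfy0), by linarith [hfy.2]⟩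
  calc volume K + ENNReal.ofReal (f v)
      = volume (K ∩ f ⁻¹' Set.Iic (f p)) + volume ((segment ℝ p q + segment ℝ 0 v) \ f ⁻¹' {f p})
          + volume (v +ᵥ (K \ f ⁻¹' Set.Iic (f p))) := by
        rw [measure_sdiff_null (addHaar_preimage_singleton_linearMap volume hf_ne _), measure_vadd,
          volume_segment_add_segment o, sub_zero, abs_of_pos hpos, add_right_comm,
          measure_inter_add_sdiff K (hmeas measurableSet_Iic)]
    _ ≤ volume (S ∩ f ⁻¹' Set.Iic (f p)) + volume (S ∩ f ⁻¹' Set.Ioc (f p) (f p + f v))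
          + volume (S ∩ f ⁻¹' Set.Ioi (f p + f v)) := by gcongr
    _ = volume S := measure_inter_preimage_Iic_add_Ioc_add_Ioi volume hmeas (by linarith) S

theorem volume_add_abs_areaForm_le_volume_add_segment {K : Set E} {p q : E} (h : segment ℝ p q ⊆ K)
    (v : E) :
    volume K + ENNReal.ofReal |o.areaForm (q - p) v| ≤ volume (K + segment ℝ 0 v) := by
  rcases lt_trichotomy (o.areaForm (q - p) v) 0 with hneg | hzero | hpos
  · have hswap : o.areaForm (p - q) v = -o.areaForm (q - p) v := by
      rw [← neg_sub q p, map_neg, LinearMap.neg_apply]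
    rw [abs_of_neg hneg, ← hswap]
    exact volume_add_areaForm_le_volume_add_segment_of_pos o (segment_symm ℝ p q ▸ h)
      (hswap ▸ neg_pos.2 hneg)
  · rw [hzero, abs_zero, ENNReal.ofReal_zero, add_zero]
    exact measure_mono (Set.subset_add_left K (left_mem_segment ℝ 0 v))
  · rw [abs_of_pos hpos]
    exact volume_add_areaForm_le_volume_add_segment_of_pos o h hpos

theorem volume_add_abs_areaForm_add_abs_areaForm_le {K : Set E} {p q p' q' : E}
    (h : segment ℝ p q ⊆ K) (h' : segment ℝ p' q' ⊆ K) (u v : E) :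
    volume K + ENNReal.ofReal (|o.areaForm (q - p) u| + |o.areaForm (q' - p') v|) ≤
      volume (K + (segment ℝ 0 u + segment ℝ 0 v)) := by
  have h'' : segment ℝ p' q' ⊆ K + segment ℝ 0 u :=
    h'.trans (Set.subset_add_left K (left_mem_segment ℝ 0 u))
  rw [ENNReal.ofReal_add (abs_nonneg _) (abs_nonneg _), ← add_assoc, ← add_assoc]
  exact (add_le_add_left (volume_add_abs_areaForm_le_volume_add_segment o h u) _).trans
    (volume_add_abs_areaForm_le_volume_add_segment o h'' v)

theorem vadd_segment_add_segment_subset {𝕜 F : Type*} [Field 𝕜] [LinearOrder 𝕜]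
    [IsStrictOrderedRing 𝕜] [AddCommGroup F] [Module 𝕜 F] {K : Set F} (hK : Convex 𝕜 K)
    {x u v : F} (hx : x ∈ K) (hu : x + u ∈ K) (hv : x + v ∈ K) (huv : x + u + v ∈ K) :
    x +ᵥ (segment 𝕜 0 u + segment 𝕜 0 v) ⊆ K := by
  rw [← convexHull_pair, ← convexHull_pair, ← convexHull_add, ← convexHull_vadd]
  refine convexHull_min ?_ hK
  rintro _ ⟨_, ⟨a, rfl | rfl, b, rfl | rfl, rfl⟩, rfl⟩ <;>
    simpa [← add_assoc] using ‹_›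

theorem volume_add_mul_abs_areaForm_add_abs_areaForm_le {K : Set E} (hK : Convex ℝ K) {x u v : E}
    (hx : x ∈ K) (hu : x + u ∈ K) (hv : x + v ∈ K) (huv : x + u + v ∈ K) {p q p' q' : E}
    (hp : p ∈ K) (hq : q ∈ K) (hp' : p' ∈ K) (hq' : q' ∈ K) {ε : ℝ} (hε : 0 ≤ ε) :
    volume K + ENNReal.ofReal (ε * (|o.areaForm (q - p) u| + |o.areaForm (q' - p') v|)) ≤
      ENNReal.ofReal ((1 + ε) ^ 2) * volume K := by
  have hparallelogram : ε • x +ᵥ (segment ℝ 0 (ε • u) + segment ℝ 0 (ε • v)) ⊆ ε • K := by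
    refine vadd_segment_add_segment_subset (hK.smul ε) ?_ ?_ ?_ ?_ <;>
      simpa only [← smul_add] using Set.smul_mem_smul_set ‹_›
  calc volume K + ENNReal.ofReal (ε * (|o.areaForm (q - p) u| + |o.areaForm (q' - p') v|))
      = volume K + ENNReal.ofReal
          (|o.areaForm (q - p) (ε • u)| + |o.areaForm (q' - p') (ε • v)|) := by
        simp only [map_smul, smul_eq_mul, abs_mul, abs_of_nonneg hε, ← mul_add]
    _ ≤ volume (K + (segment ℝ 0 (ε • u) + segment ℝ 0 (ε • v))) :=
        volume_add_abs_areaForm_add_abs_areaForm_le o (hK.segment_subset hp hq)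
          (hK.segment_subset hp' hq') _ _
    _ = volume (K + (ε • x +ᵥ (segment ℝ 0 (ε • u) + segment ℝ 0 (ε • v)))) := by
        rw [add_vadd_comm, measure_vadd]
    _ ≤ volume (K + ε • K) := by gcongr
    _ = volume ((1 + ε) • K) := by rw [hK.add_smul zero_le_one hε, one_smul]
    _ = ENNReal.ofReal ((1 + ε) ^ 2) * volume K := by
        rw [Measure.addHaar_smul_of_nonneg _ (by positivity), Fact.out (p := finrank ℝ E = 2)]

theorem abs_areaForm_add_abs_areaForm_le_two_mul_volume {K : Set E} (hK : Convex ℝ K)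
    (hK_fin : volume K ≠ ⊤) {x u v : E} (hx : x ∈ K) (hu : x + u ∈ K) (hv : x + v ∈ K)
    (huv : x + u + v ∈ K) {p q p' q' : E} (hp : p ∈ K) (hq : q ∈ K) (hp' : p' ∈ K) (hq' : q' ∈ K) :
    |o.areaForm (q - p) u| + |o.areaForm (q' - p') v| ≤ 2 * volume.real K := by
  set M := |o.areaForm (q - p) u| + |o.areaForm (q' - p') v|
  have hscaled : ∀ ε : ℝ, 0 < ε → M ≤ (2 + ε) * volume.real K := by
    intro ε hε
    have hreal := ENNReal.toReal_mono (by finiteness)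
      (volume_add_mul_abs_areaForm_add_abs_areaForm_le o hK hx hu hv huv hp hq hp' hq' hε.le)
    rw [ENNReal.toReal_add hK_fin ENNReal.ofReal_ne_top, ENNReal.toReal_mul,
      ENNReal.toReal_ofReal (by positivity), ENNReal.toReal_ofReal (by positivity),
      ← measureReal_def] at hreal
    refine le_of_mul_le_mul_left ?_ hε
    linarith
  have hlim : Filter.Tendsto (fun ε : ℝ ↦ (2 + ε) * volume.real K) (nhdsWithin 0 (Set.Ioi 0))
      (nhds ((2 + 0) * volume.real K)) := by
    refine Filter.Tendsto.mono_left (Continuous.tendsto ?_ 0) nhdsWithin_le_nhds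
    fun_prop
  simpa only [add_zero] using ge_of_tendsto hlim (eventually_nhdsWithin_of_forall hscaled)

end Plane

section Coordinates

local instance : Fact (finrank ℝ (EuclideanSpace ℝ (Fin 2)) = 2) :=
  ⟨finrank_euclideanSpace_fin⟩

/-- The unit vector at angle `θ` from the positive first coordinate axis. -/
noncomputable def unitVec (θ : ℝ) : EuclideanSpace ℝ (Fin 2) :=
  pt (cos θ) (sin θ)

theorem pt_add_smul_unitVec (x y r θ : ℝ) :
    pt (x + r * cos θ) (y + r * sin θ) = pt x y + r • unitVec θ := by
  ext i
  fin_cases i <;> simp [pt, unitVec]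

theorem unitVec_sub_unitVec (s t : ℝ) :
    unitVec s - unitVec t = (2 * sin ((s - t) / 2)) • unitVec ((s + t) / 2 + π / 2) := by
  ext i
  fin_cases i
  · change cos s - cos t = 2 * sin ((s - t) / 2) * cos ((s + t) / 2 + π / 2)
    rw [cos_sub_cos, cos_add_pi_div_two]
    ring
  · change sin s - sin t = 2 * sin ((s - t) / 2) * sin ((s + t) / 2 + π / 2)
    rw [sin_sub_sin, sin_add_pi_div_two]

theorem abs_areaForm_smul_unitVec (o : Orientation ℝ (EuclideanSpace ℝ (Fin 2)) (Fin 2))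
    (r r' s t : ℝ) :
    |o.areaForm (r • unitVec s) (r' • unitVec t)| = |r * r'| * |sin (t - s)| := by
  have hunit : |o.areaForm (unitVec s) (unitVec t)| = |sin (t - s)| := by
    rw [o.areaForm_to_volumeForm, o.volumeForm_robust' (EuclideanSpace.basisFun (Fin 2) ℝ),
      Basis.det_apply, Matrix.det_fin_two]
    change |cos s * sin t - cos t * sin s| = |sin (t - s)|
    rw [sin_sub]
    ring_nf
  rw [map_smul, map_smul, LinearMap.smul_apply, smul_smul, smul_eq_mul, abs_mul, hunit,
    mul_comm r' r]

theorem sqVertex_sub_sqVertex (x y a : ℝ) (k l : Fin 4) :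
    sqVertex x y a k - sqVertex x y a l =
      (√2 / 3 * sin (((k : ℕ) - (l : ℕ) : ℝ) * (π / 4))) •
        unitVec (a + ((k : ℕ) + (l : ℕ) : ℝ) * (π / 4) + π / 2) := by
  rw [sqVertex, sqVertex, pt_add_smul_unitVec, pt_add_smul_unitVec, add_sub_add_left_eq_sub,
    ← smul_sub, unitVec_sub_unitVec, smul_smul]
  ring_nf

theorem triVertex_sub_triVertex (x y b : ℝ) (k l : Fin 3) :
    triVertex x y b k - triVertex x y b l =
      (√3 / 3 * sin (((k : ℕ) - (l : ℕ) : ℝ) * (π / 3))) •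
        unitVec (b + ((k : ℕ) + (l : ℕ) : ℝ) * (π / 3) + π / 2) := by
  rw [triVertex, triVertex, pt_add_smul_unitVec, pt_add_smul_unitVec, add_sub_add_left_eq_sub,
    ← smul_sub, unitVec_sub_unitVec, smul_smul]
  ring_nf

theorem sin_three_mul_pi_div_four : sin (3 * (π / 4)) = √2 / 2 := by
  rw [← sin_pi_sub, ← sin_pi_div_four]
  ring_nf

theorem sin_two_mul_pi_div_three : sin (2 * (π / 3)) = √3 / 2 := by
  rw [← sin_pi_sub, ← sin_pi_div_three]
  ring_nf

theorem sqrt_two_div_three_mul_sqrt_two_div_two : √2 / 3 * (√2 / 2) = 1 / 3 := by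
  rw [div_mul_div_comm, mul_self_sqrt zero_le_two]
  norm_num

theorem sqrt_three_div_three_mul_sqrt_three_div_two : √3 / 3 * (√3 / 2) = 1 / 2 := by
  rw [div_mul_div_comm, mul_self_sqrt zero_le_three]
  norm_num

theorem sqVertex_one_sub_zero (x y a : ℝ) :
    sqVertex x y a 1 - sqVertex x y a 0 = (1 / 3 : ℝ) • unitVec (a + 3 * π / 4) := by
  rw [← sqrt_two_div_three_mul_sqrt_two_div_two, ← sin_pi_div_four]
  convert sqVertex_sub_sqVertex x y a 1 0 using 3 <;> norm_num
  ring

theorem sqVertex_two_sub_one (x y a : ℝ) :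
    sqVertex x y a 2 - sqVertex x y a 1 = (1 / 3 : ℝ) • unitVec (a + 5 * π / 4) := by
  rw [← sqrt_two_div_three_mul_sqrt_two_div_two, ← sin_pi_div_four]
  convert sqVertex_sub_sqVertex x y a 2 1 using 3 <;> norm_num
  ring

theorem sqVertex_three_sub_zero (x y a : ℝ) :
    sqVertex x y a 3 - sqVertex x y a 0 = (1 / 3 : ℝ) • unitVec (a + 5 * π / 4) := by
  rw [← sqrt_two_div_three_mul_sqrt_two_div_two, ← sin_three_mul_pi_div_four]
  convert sqVertex_sub_sqVertex x y a 3 0 using 3 <;> norm_num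
  ring

theorem triVertex_two_sub_zero (x y b : ℝ) :
    triVertex x y b 2 - triVertex x y b 0 = (1 / 2 : ℝ) • unitVec (b + 7 * π / 6) := by
  rw [← sqrt_three_div_three_mul_sqrt_three_div_two, ← sin_two_mul_pi_div_three]
  convert triVertex_sub_triVertex x y b 2 0 using 3 <;> norm_num
  ring

theorem abs_areaForm_triVertex_sub_sqVertex_sub
    (o : Orientation ℝ (EuclideanSpace ℝ (Fin 2)) (Fin 2)) (x1 y1 a x2 y2 b : ℝ) :
    |o.areaForm (triVertex x2 y2 b 2 - triVertex x2 y2 b 0)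
      (sqVertex x1 y1 a 1 - sqVertex x1 y1 a 0)| = 1 / 6 * |cos (a - b + π / 12)| := by
  have hangle : a + 3 * π / 4 - (b + 7 * π / 6) = a - b + π / 12 - π / 2 := by ring
  rw [triVertex_two_sub_zero, sqVertex_one_sub_zero, abs_areaForm_smul_unitVec, hangle,
    sin_sub_pi_div_two, abs_neg]
  norm_num

theorem abs_areaForm_pt_sub_sqVertex_sub
    (o : Orientation ℝ (EuclideanSpace ℝ (Fin 2)) (Fin 2)) (x y a : ℝ) :
    |o.areaForm (pt 1 0 - pt 0 0) (sqVertex x y a 3 - sqVertex x y a 0)| =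
      1 / 3 * |cos (a - π / 4)| := by
  have hbase : pt 1 0 - pt 0 0 = (1 : ℝ) • unitVec 0 := by
    ext i
    fin_cases i <;> simp [pt, unitVec]
  have hangle : a + 5 * π / 4 - 0 = a - π / 4 + π / 2 + π := by ring
  rw [hbase, sqVertex_three_sub_zero, abs_areaForm_smul_unitVec, hangle, sin_add_pi,
    sin_add_pi_div_two, abs_neg]
  norm_num

theorem isCompact_convexHull_config (x1 y1 a x2 y2 b : ℝ) :
    IsCompact (convexHull ℝ (config x1 y1 a x2 y2 b)) :=
  (((Set.toFinite _).union (Set.finite_range _)).union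
    (Set.finite_range _)).isCompact_convexHull ℝ

theorem second_inequality_general (x1 y1 a x2 y2 b : ℝ) :
    area x1 y1 a x2 y2 b ≥ 1 / 6 * (1 / 2 * |cos (a - b + π / 12)| + |cos (a - π / 4)|) := by
  have hE : pt 0 0 ∈ config x1 y1 a x2 y2 b := .inl (.inl (.inl rfl))
  have hF : pt 1 0 ∈ config x1 y1 a x2 y2 b := .inl (.inl (.inr rfl))
  have hsquare (k) : sqVertex x1 y1 a k ∈ config x1 y1 a x2 y2 b := .inl (.inr ⟨k, rfl⟩)
  have htriangle (k) : triVertex x2 y2 b k ∈ config x1 y1 a x2 y2 b := .inr ⟨k, rfl⟩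
  have hopposite : sqVertex x1 y1 a 1 + (sqVertex x1 y1 a 3 - sqVertex x1 y1 a 0) =
      sqVertex x1 y1 a 2 := by
    rw [sqVertex_three_sub_zero, ← sqVertex_two_sub_one x1 y1, add_sub_cancel]
  have hsub := subset_convexHull ℝ (config x1 y1 a x2 y2 b)
  let o := (EuclideanSpace.basisFun (Fin 2) ℝ).toBasis.orientation
  have hmixed := abs_areaForm_add_abs_areaForm_le_two_mul_volume o (convex_convexHull ℝ _)
    (isCompact_convexHull_config x1 y1 a x2 y2 b).measure_lt_top.ne
    (u := sqVertex x1 y1 a 1 - sqVertex x1 y1 a 0) (v := sqVertex x1 y1 a 3 - sqVertex x1 y1 a 0)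
    (hsub (hsquare 0))
    (by simpa only [add_sub_cancel] using hsub (hsquare 1))
    (by simpa only [add_sub_cancel] using hsub (hsquare 3))
    (by simpa only [add_sub_cancel, hopposite] using hsub (hsquare 2))
    (hsub (htriangle 0)) (hsub (htriangle 2)) (hsub hE) (hsub hF)
  rw [abs_areaForm_triVertex_sub_sqVertex_sub, abs_areaForm_pt_sub_sqVertex_sub] at hmixed
  change volume.real _ ≥ _
  linarith

end Coordinates

theorem second_inequality (x1 y1 a x2 y2 b : ℝ)
    (ha : Real.pi / 4 ≤ a) (ha' : a ≤ 78 * Real.pi / 180)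
    (hb : 83 * Real.pi / 180 ≤ b) (hb' : b ≤ 97 * Real.pi / 180)
    (hK2 : K2 x1 y1 a x2 y2 b) :
    area x1 y1 a x2 y2 b ≥
      1 / 6 * (1 / 2 * Real.cos (a - b + Real.pi / 12) + Real.cos (a - Real.pi / 4)) := by
  refine le_trans ?_ (second_inequality_general x1 y1 a x2 y2 b)
  gcongr <;> exact le_abs_self _
end

section
/- Let d₁ ≥ 0 and 0 ≤ d₂ ≤ 2π, and set δ = d₁/√2 + sin(d₂/4)/√3. Let v = (x₁,y₁,α,x₂,y₂,β) be a parameter tuple such that every point of the configuration X(v) lies within distance 1 of E, within distance 1 of F, and has second coordinate in [−0.46, 0.46]. Then for any perturbed tuple v' = (x₁+δ₁, y₁+δ₂, α+θ₁, x₂+δ₃, y₂+δ₄, β+θ₂) with |δᵢ| ≤ d₁/2 for i = 1,...,4 and |θⱼ| ≤ d₂/2 for j = 1,2, one has μ(v') ≤ μ(v) + 3.4637·δ + π·δ². -/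
/-!
The perturbation moves every vertex by at most `δ`, so the new convex hull lies in `K + δB`, where
`K` is the old hull and `B` the unit disc. By Steiner's formula its area is at most
`|K| + δ · per K + π δ²`, where `per K` is the integral of the width of `K` over a half turn.

Steiner's inequality is obtained by adding segments: by Cavalieri's principle, adding a segment
increases the area of a convex set by at most the length of the segment times the width of the set
across it. Adding one after the other the edges of a regular `2N`-gon circumscribed to `δB`,
averaging over the rotations of the polygon and letting `N` tend to infinity gives the formula.

Finally, `K` lies in the lens cut out by the two unit discs, truncated at height `0.46`; the width
of the truncated lens is bounded explicitly in each direction.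
-/

open Real MeasureTheory

open Set
open scoped Pointwise RealInnerProductSpace ComplexConjugate

section Width

variable {E : Type*} [NormedAddCommGroup E] [InnerProductSpace ℝ E] {K L : Set E} {u : E}

/-- The width of a set in the direction of a vector `u`, scaled by `‖u‖`: the support function of
the difference set `K - K`. It is meaningful for bounded `K`, and `0` for the empty set. -/
noncomputable def width (K : Set E) (u : E) : ℝ :=
  sSup ((fun p : E × E => ⟪u, p.1 - p.2⟫) '' K ×ˢ K)

lemma inner_sub_le_width (hK : IsCompact K) {p q : E} (hp : p ∈ K) (hq : q ∈ K) :
    ⟪u, p - q⟫ ≤ width K u :=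
  le_csSup ((hK.prod hK).image (by fun_prop)).bddAbove ⟨(p, q), ⟨hp, hq⟩, rfl⟩

lemma width_le {c : ℝ} (hc : 0 ≤ c) (h : ∀ p ∈ K, ∀ q ∈ K, ⟪u, p - q⟫ ≤ c) : width K u ≤ c :=
  Real.sSup_le (by rintro _ ⟨⟨p, q⟩, ⟨hp, hq⟩, rfl⟩; exact h p hp q hq) hc

lemma width_nonneg (K : Set E) (u : E) : 0 ≤ width K u := by
  rcases K.eq_empty_or_nonempty with rfl | ⟨p, hp⟩
  · simp [width]
  · exact Real.sSup_nonneg' ⟨0, ⟨(p, p), ⟨hp, hp⟩, by simp⟩, le_rfl⟩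

lemma width_smul {r : ℝ} (hr : 0 ≤ r) (K : Set E) (u : E) : width K (r • u) = r * width K u := by
  simp only [width, real_inner_smul_left, ← smul_eq_mul, ← Real.sSup_smul_of_nonneg hr,
    ← image_smul, image_image]

lemma width_image_linearIsometryEquiv {F : Type*} [NormedAddCommGroup F] [InnerProductSpace ℝ F]
    (L : E ≃ₗᵢ[ℝ] F) (K : Set E) (u : E) : width (L '' K) (L u) = width K u := by
  simp only [width, prod_image_image_eq, image_image, ← map_sub, LinearIsometryEquiv.inner_map_map]

lemma width_add_le (hK : IsCompact K) (hL : IsCompact L) (u : E) :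
    width (K + L) u ≤ width K u + width L u := by
  refine width_le (add_nonneg (width_nonneg K u) (width_nonneg L u)) ?_
  rintro _ ⟨p, hp, p', hp', rfl⟩ _ ⟨q, hq, q', hq', rfl⟩
  rw [add_sub_add_comm, inner_add_right]
  exact add_le_add (inner_sub_le_width hK hp hq) (inner_sub_le_width hL hp' hq')

lemma width_segment_le (x y u : E) : width (segment ℝ x y) u ≤ |⟪u, y - x⟫| := by
  refine width_le (abs_nonneg _) fun p hp q hq => ?_
  have himage : (fun z => ⟪u, z⟫) '' segment ℝ x y = uIcc ⟪u, x⟫ ⟪u, y⟫ := by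
    rw [← segment_eq_uIcc]
    exact image_segment ℝ (innerₛₗ ℝ u).toAffineMap x y
  simp only [inner_sub_right]
  exact (le_abs_self _).trans <| abs_sub_le_of_uIcc_subset_uIcc <|
    uIcc_subset_uIcc (himage ▸ mem_image_of_mem _ hq) (himage ▸ mem_image_of_mem _ hp)

lemma continuous_width (hK : IsCompact K) : Continuous (width K) :=
  (hK.prod hK).continuous_sSup (f := fun u p => ⟪u, p.1 - p.2⟫) (by fun_prop)

end Width

section Zonotope

variable {E ι : Type*}

lemma isCompact_segment [AddCommGroup E] [Module ℝ E] [TopologicalSpace E]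
    [IsTopologicalAddGroup E] [ContinuousSMul ℝ E] (x y : E) : IsCompact (segment ℝ x y) := by
  rw [← convexHull_pair]
  exact (toFinite _).isCompact_convexHull ℝ

/-- The zonotope generated by the vectors `v i`, `i ∈ s`: the Minkowski sum of the centred
segments `[-v i, v i]`. -/
def zonotope [AddCommGroup E] [Module ℝ E] (s : Finset ι) (v : ι → E) : Set E :=
  ∑ i ∈ s, segment ℝ (-v i) (v i)

lemma convex_zonotope [AddCommGroup E] [Module ℝ E] (s : Finset ι) (v : ι → E) :
    Convex ℝ (zonotope s v) :=
  convex_sum _ fun _ _ => convex_segment _ _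

lemma isCompact_zonotope [AddCommGroup E] [Module ℝ E] [TopologicalSpace E]
    [IsTopologicalAddGroup E] [ContinuousSMul ℝ E] (s : Finset ι) (v : ι → E) :
    IsCompact (zonotope s v) :=
  Finset.sum_induction _ IsCompact (fun _ _ => IsCompact.add) isCompact_singleton
    fun _ _ => isCompact_segment _ _

lemma exists_mem_zonotope_eq_neg_sum_abs [AddCommGroup E] [Module ℝ E] (s : Finset ι)
    (v : ι → E) (f : E →ₗ[ℝ] ℝ) : ∃ z ∈ zonotope s v, f z = -∑ i ∈ s, |f (v i)| := by
  have hmin (i : ι) : ∃ z ∈ segment ℝ (-v i) (v i), f z = -|f (v i)| := by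
    rcases abs_choice (f (v i)) with h | h
    · exact ⟨-v i, left_mem_segment ℝ _ _, by rw [map_neg, h]⟩
    · exact ⟨v i, right_mem_segment ℝ _ _, by rw [h, neg_neg]⟩
  choose z hz hfz using hmin
  exact ⟨∑ i ∈ s, z i, finsetSum_mem_finsetSum s _ z fun i _ => hz i, by
    rw [map_sum, Finset.sum_congr rfl fun i _ => hfz i, Finset.sum_neg_distrib]⟩

variable [NormedAddCommGroup E] [InnerProductSpace ℝ E]

lemma width_zonotope_le (s : Finset ι) (v : ι → E) (u : E) :
    width (zonotope s v) u ≤ ∑ i ∈ s, 2 * |⟪u, v i⟫| := by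
  classical
  induction s using Finset.induction_on with
  | empty => exact width_le le_rfl (by simp [zonotope])
  | insert i s hi ih =>
    rw [zonotope, Finset.sum_insert hi, Finset.sum_insert hi]
    refine (width_add_le (isCompact_segment _ _) (isCompact_zonotope s v) u).trans ?_
    refine add_le_add ((width_segment_le _ _ u).trans_eq ?_) ih
    rw [sub_neg_eq_add, ← two_smul ℝ, real_inner_smul_right, abs_mul, abs_two]

lemma closedBall_subset_zonotope [CompleteSpace E] {s : Finset ι} {v : ι → E} {r : ℝ}
    (h : ∀ u : E, r * ‖u‖ ≤ ∑ i ∈ s, |⟪u, v i⟫|) : Metric.closedBall 0 r ⊆ zonotope s v := by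
  intro z hz
  by_contra hzs
  obtain ⟨f, c, hfz, hfc⟩ := geometric_hahn_banach_point_closed (convex_zonotope s v)
    (isCompact_zonotope s v).isClosed hzs
  obtain ⟨w, hw, hfw⟩ := exists_mem_zonotope_eq_neg_sum_abs s v f.toLinearMap
  obtain ⟨u, rfl⟩ := (InnerProductSpace.toDual ℝ E).surjective f
  simp only [ContinuousLinearMap.coe_coe, InnerProductSpace.toDual_apply_apply] at hfz hfw hfc
  have hlower : -(r * ‖u‖) ≤ ⟪u, z⟫ :=
    calc -(r * ‖u‖) ≤ -(‖u‖ * ‖z‖) := by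
          rw [mul_comm r]
          gcongr
          simpa using hz
      _ ≤ ⟪u, z⟫ := neg_le_of_abs_le (abs_real_inner_le_norm u z)
  linarith [hfc w hw, h u]

end Zonotope

section Slab

lemma volume_add_Icc_le {S : Set ℝ} (hS : IsCompact S) (hSc : Convex ℝ S) (hne : S.Nonempty)
    {h : ℝ} (hh : 0 ≤ h) : volume (S + Icc (-h) h) ≤ volume S + ENNReal.ofReal (2 * h) := by
  have hIcc := eq_Icc_of_connected_compact ⟨hne, hSc.isPreconnected⟩ hS
  have hle : sInf S ≤ sSup S := csInf_le_csSup hne hS.bddBelow hS.bddAbove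
  rw [hIcc, Icc_add_Icc hle (by linarith), Real.volume_Icc, Real.volume_Icc,
    ← ENNReal.ofReal_add (by linarith) (by linarith)]
  gcongr
  linarith

lemma preimage_prodMk_add_singleton_prod {A B : Type*} [AddZeroClass A] [Add B] (K : Set (A × B))
    (S : Set B) (x : A) : Prod.mk x ⁻¹' (K + {0} ×ˢ S) = Prod.mk x ⁻¹' K + S := by
  ext y
  simp only [mem_preimage, mem_add, mem_prod, mem_singleton_iff, Prod.exists, Prod.mk_add_mk,
    Prod.mk.injEq]
  constructor
  · rintro ⟨a, b, hab, c, d, ⟨rfl, hd⟩, rfl, rfl⟩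
    exact ⟨b, by rwa [add_zero], d, hd, rfl⟩
  · rintro ⟨b, hb, d, hd, rfl⟩
    exact ⟨x, b, hb, 0, d, ⟨rfl, hd⟩, add_zero x, rfl⟩

lemma prod_volume_add_singleton_prod_Icc_le {E : Type*} [NormedAddCommGroup E] [NormedSpace ℝ E]
    [MeasurableSpace E] [BorelSpace E] (μ : Measure E) {K : Set (E × ℝ)}
    (hK : IsCompact K) (hKc : Convex ℝ K) {h : ℝ} (hh : 0 ≤ h) :
    μ.prod volume (K + {0} ×ˢ Icc (-h) h) ≤
      μ.prod volume K + ENNReal.ofReal (2 * h) * μ (Prod.fst '' K) := by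
  have hle (x : E) : volume (Prod.mk x ⁻¹' (K + {0} ×ˢ Icc (-h) h)) ≤
      volume (Prod.mk x ⁻¹' K) +
        (Prod.fst '' K).indicator (fun _ => ENNReal.ofReal (2 * h)) x := by
    rw [preimage_prodMk_add_singleton_prod]
    rcases (Prod.mk x ⁻¹' K).eq_empty_or_nonempty with hempty | ⟨y, hy⟩
    · simp [hempty]
    · have hcompact : IsCompact (Prod.mk x ⁻¹' K) :=
        (hK.image continuous_snd).of_isClosed_subset (hK.isClosed.preimage (by fun_prop))
          fun b hb => ⟨(x, b), hb, rfl⟩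
      have hconvex : Convex ℝ (Prod.mk x ⁻¹' K) :=
        hKc.affine_preimage (AffineMap.prod (AffineMap.const ℝ ℝ x) (AffineMap.id ℝ ℝ))
      rw [indicator_of_mem (show x ∈ Prod.fst '' K from ⟨(x, y), hy, rfl⟩)]
      exact volume_add_Icc_le hcompact hconvex ⟨y, hy⟩ hh
  have hfst : MeasurableSet (Prod.fst '' K) := (hK.image continuous_fst).measurableSet
  have hsum : IsCompact (K + ({0} : Set E) ×ˢ Icc (-h) h) :=
    hK.add (isCompact_singleton.prod isCompact_Icc)
  rw [Measure.prod_apply hsum.measurableSet, Measure.prod_apply hK.measurableSet,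
    ← lintegral_indicator_const hfst, ← lintegral_add_right _ (measurable_const.indicator hfst)]
  exact lintegral_mono hle

lemma volume_image_linearIsometryEquiv {E F : Type*} [NormedAddCommGroup E] [InnerProductSpace ℝ E]
    [FiniteDimensional ℝ E] [MeasurableSpace E] [BorelSpace E] [NormedAddCommGroup F]
    [InnerProductSpace ℝ F] [FiniteDimensional ℝ F] [MeasurableSpace F] [BorelSpace F]
    (e : E ≃ₗᵢ[ℝ] F) (s : Set E) : volume (e '' s) = volume s := by
  have h := e.measurePreserving.measure_preimage_equiv (f := e.toMeasurableEquiv) (e '' s)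
  rwa [LinearIsometryEquiv.coe_toMeasurableEquiv, preimage_image_eq _ e.injective, eq_comm] at h

lemma volume_equivRealProdCLM_image (S : Set ℂ) :
    volume (Complex.equivRealProdCLM '' S) = volume S := by
  have h := Complex.volume_preserving_equiv_real_prod.measure_preimage_equiv
    (Complex.equivRealProdCLM '' S)
  rw [← h]
  exact congrArg volume (preimage_image_eq S Complex.equivRealProdCLM.injective)

lemma volume_re_image_le_width {K : Set ℂ} (hK : IsCompact K) :
    volume (Complex.re '' K) ≤ ENNReal.ofReal (width K 1) := by
  refine (Real.volume_le_diam _).trans (Metric.ediam_le_of_forall_dist_le ?_)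
  rintro _ ⟨p, hp, rfl⟩ _ ⟨q, hq, rfl⟩
  rw [Real.dist_eq, abs_sub_le_iff]
  constructor
  · simpa [Complex.inner] using inner_sub_le_width (u := (1 : ℂ)) hK hp hq
  · simpa [Complex.inner] using inner_sub_le_width (u := (1 : ℂ)) hK hq hp

lemma volume_add_vertical_segment_le {K : Set ℂ} (hK : IsCompact K) (hKc : Convex ℝ K) {h : ℝ}
    (hh : 0 ≤ h) : volume (K + segment ℝ (-(Complex.I * h)) (Complex.I * h)) ≤
      volume K + ENNReal.ofReal (2 * h * width K 1) := by
  set L := Complex.equivRealProdCLM with hL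
  have hsegment : L '' segment ℝ (-(Complex.I * h)) (Complex.I * h) = {0} ×ˢ Icc (-h) h := by
    rw [← segment_eq_Icc (neg_le_self hh), singleton_prod, Prod.image_mk_segment_right]
    refine (image_segment ℝ L.toLinearMap.toAffineMap _ _).trans ?_
    congr 1 <;> simp [hL]
  have hfst : Prod.fst '' (L '' K) = Complex.re '' K := by
    rw [image_image]; rfl
  calc volume (K + segment ℝ (-(Complex.I * h)) (Complex.I * h))
      = (volume.prod volume) (L '' K + {0} ×ˢ Icc (-h) h) := by
        rw [← volume_equivRealProdCLM_image, ← hL, image_add, hsegment]; rfl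
    _ ≤ volume K + ENNReal.ofReal (2 * h) * volume (Complex.re '' K) := by
        rw [← volume_equivRealProdCLM_image K, ← hL, ← hfst]
        exact prod_volume_add_singleton_prod_Icc_le volume (hK.image L.continuous)
          (hKc.linear_image L.toLinearMap) hh
    _ ≤ volume K + ENNReal.ofReal (2 * h * width K 1) := by
        rw [ENNReal.ofReal_mul (p := 2 * h) (by positivity)]
        gcongr
        exact volume_re_image_le_width hK

lemma volumeReal_add_segment_le {K : Set ℂ} (hK : IsCompact K) (hKc : Convex ℝ K) (n : ℂ) :
    volume.real (K + segment ℝ (-(Complex.I * n)) (Complex.I * n)) ≤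
      volume.real K + 2 * width K n := by
  let L : ℂ ≃ₗᵢ[ℝ] ℂ := rotation (Circle.exp n.arg)
  have hLn : L ‖n‖ = n := by
    simpa [L, mul_comm] using Complex.norm_mul_exp_arg_mul_I n
  have hLIn : L (Complex.I * ‖n‖) = Complex.I * n := by
    rw [← hLn]
    simp [L, mul_left_comm]
  have hsegment : L '' segment ℝ (-(Complex.I * ‖n‖)) (Complex.I * ‖n‖) =
      segment ℝ (-(Complex.I * n)) (Complex.I * n) := by
    rw [← hLIn, ← map_neg]
    exact image_segment ℝ L.toLinearEquiv.toLinearMap.toAffineMap _ _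
  obtain ⟨K, rfl⟩ : ∃ S, L '' S = K := ⟨L ⁻¹' K, image_preimage_eq K L.surjective⟩
  have hwidth : width (L '' K) n = ‖n‖ * width K 1 := by
    nth_rw 1 [← hLn]
    rw [width_image_linearIsometryEquiv, ← width_smul (norm_nonneg n), Complex.real_smul, mul_one]
  have hKL : IsCompact K := L.toHomeomorph.isCompact_image.mp hK
  have hKcL : Convex ℝ K := by
    simpa [preimage_image_eq K L.injective] using hKc.linear_preimage L.toLinearEquiv.toLinearMap
  have hle := ENNReal.toReal_le_add (volume_add_vertical_segment_le hKL hKcL (norm_nonneg n))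
    hKL.measure_ne_top ENNReal.ofReal_ne_top
  rw [ENNReal.toReal_ofReal (mul_nonneg (by positivity) (width_nonneg K 1))] at hle
  rwa [hwidth, ← hsegment, ← image_add, measureReal_def, measureReal_def,
    volume_image_linearIsometryEquiv, volume_image_linearIsometryEquiv, ← mul_assoc]

lemma volumeReal_add_zonotope_le {K : Set ℂ} (hK : IsCompact K) (hKc : Convex ℝ K) (n : ℕ → ℂ)
    (N : ℕ) :
    volume.real (K + zonotope (Finset.range N) fun k => Complex.I * n k) ≤
      volume.real K + ∑ k ∈ Finset.range N,
        2 * (width K (n k) + ∑ j ∈ Finset.range k, 2 * |⟪n k, Complex.I * n j⟫|) := by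
  induction N with
  | zero => simp [zonotope]
  | succ N ih =>
    set Z := zonotope (Finset.range N) fun k => Complex.I * n k
    have hZ : IsCompact Z := isCompact_zonotope _ _
    have hsucc : K + zonotope (Finset.range (N + 1)) (fun k => Complex.I * n k) =
        K + Z + segment ℝ (-(Complex.I * n N)) (Complex.I * n N) := by
      rw [zonotope, Finset.sum_range_succ, ← add_assoc]
      rfl
    have hwidth := (width_add_le hK hZ (n N)).trans
      (add_le_add_right (width_zonotope_le _ _ (n N)) (width K (n N)))
    rw [hsucc, Finset.sum_range_succ]
    linarith [volumeReal_add_segment_le (hK.add hZ) (hKc.add (convex_zonotope _ _)) (n N)]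

end Slab

section SineSums

lemma periodic_sum_range_add {M : Type*} [AddCommGroup M] {f : ℝ → M} {c : ℝ} {N : ℕ}
    (hf : Function.Periodic f (N * c)) :
    Function.Periodic (fun t => ∑ k ∈ Finset.range N, f (t + k * c)) c := by
  intro t
  have hshift (k : ℕ) : f (t + c + k * c) = f (t + (k + 1 : ℕ) * c) := by
    push_cast
    ring_nf
  have h := Finset.sum_range_succ' (fun k : ℕ => f (t + k * c)) N
  rw [Finset.sum_range_succ, hf t] at h
  simp only [hshift]
  simpa using h.symm

lemma periodic_sum_abs_sin {N : ℕ} (hN : N ≠ 0) :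
    Function.Periodic (fun t => ∑ k ∈ Finset.range N, |sin (t + k * (π / N))|) (π / N) := by
  refine periodic_sum_range_add (f := fun t => |sin t|) fun t => ?_
  simp only [mul_div_cancel₀ π (Nat.cast_ne_zero.mpr hN), sin_add_pi, abs_neg]

lemma pi_div_two_mul_nat_le (N : ℕ) : π / (2 * N) ≤ π / 2 := by
  rcases N.eq_zero_or_pos with rfl | hN
  · simpa using pi_div_two_pos.le
  · gcongr
    linarith [show (1 : ℝ) ≤ N by exact_mod_cast hN]

lemma sin_pi_div_two_mul_nat_pos {N : ℕ} (hN : N ≠ 0) : 0 < sin (π / (2 * N)) :=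
  sin_pos_of_pos_of_lt_pi (by positivity) (by linarith [pi_div_two_mul_nat_le N, pi_pos])

lemma sum_abs_sin_eq {N : ℕ} (hN : N ≠ 0) {t : ℝ} (ht : t ∈ Icc 0 (π / N)) :
    ∑ k ∈ Finset.range N, |sin (t + k * (π / N))| = cos (t - π / (2 * N)) / sin (π / (2 * N)) := by
  have hNpos : (0 : ℝ) < N := by positivity
  have hpos := sin_pi_div_two_mul_nat_pos hN
  have hsin (k : ℕ) (hk : k ∈ Finset.range N) : |sin (t + k * (π / N))| = sin (π / N * k + t) := by
    have hkN : (k : ℝ) + 1 ≤ N := by exact_mod_cast Finset.mem_range.mp hk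
    have hle : t + k * (π / N) ≤ π :=
      calc t + k * (π / N) ≤ (k + 1) * (π / N) := by linarith [ht.2]
        _ ≤ N * (π / N) := by gcongr
        _ = π := mul_div_cancel₀ π hNpos.ne'
    have ht0 : 0 ≤ t := ht.1
    rw [abs_of_nonneg (sin_nonneg_of_nonneg_of_le_pi (by positivity) hle), add_comm, mul_comm]
  have hstep : π / N = 2 * (π / (2 * N)) := by field_simp
  have hne (m : ℤ) : π / N ≠ m * (2 * π) := fun h => by
    rw [show π / (2 * N) = m * π by linarith] at hpos
    exact hpos.ne' (sin_int_mul_pi m)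
  rw [Finset.sum_congr rfl hsin, Real.sum_sin N hne]
  have hphase : ((N : ℝ) - 1) * (π / N) / 2 + t = t - π / (2 * N) + π / 2 := by field_simp; ring
  have hquarter : (N : ℝ) * (π / N) / 2 = π / 2 := by field_simp
  rw [hphase, hquarter, sin_pi_div_two, sin_add_pi_div_two, one_mul, div_div, mul_comm (N : ℝ)]

lemma cot_le_sum_abs_sin {N : ℕ} (hN : N ≠ 0) (t : ℝ) :
    cot (π / (2 * N)) ≤ ∑ k ∈ Finset.range N, |sin (t + k * (π / N))| := by
  obtain ⟨t₀, ht₀, heq⟩ := (periodic_sum_abs_sin hN).exists_mem_Ico₀ (by positivity) t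
  simp only [heq]
  have hhalf : π / N = 2 * (π / (2 * N)) := by field_simp
  have hle : π / (2 * N) ≤ π := by linarith [pi_div_two_mul_nat_le N, pi_pos]
  rw [sum_abs_sin_eq hN (Ico_subset_Icc_self ht₀), Real.cot_eq_cos_div_sin]
  gcongr
  · exact (sin_pi_div_two_mul_nat_pos hN).le
  · rw [← cos_abs (t₀ - _)]
    exact cos_le_cos_of_nonneg_of_le_pi (abs_nonneg _) hle
      (abs_le.mpr ⟨by linarith [ht₀.1], by linarith [ht₀.2]⟩)

lemma sum_abs_sin_nat_mul_eq_cot {N : ℕ} (hN : N ≠ 0) (k : ℕ) :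
    ∑ j ∈ Finset.range N, |sin (k * (π / N) - j * (π / N))| = cot (π / (2 * N)) := by
  have hper := (periodic_sum_abs_sin hN).sub_nat_mul_eq (x := 0) k
  have hzero := sum_abs_sin_eq hN (left_mem_Icc.mpr (by positivity : 0 ≤ π / N))
  rw [← hper, zero_sub, zero_sub, cos_neg, ← Real.cot_eq_cos_div_sin] at hzero
  rw [← hzero]
  refine Finset.sum_congr rfl fun j _ => ?_
  rw [neg_add_eq_sub, ← abs_neg, ← sin_neg, neg_sub]

lemma sum_range_sum_range_of_symm {R : Type*} [CommSemiring R] {f : ℕ → ℕ → R}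
    (hsymm : ∀ i j, f i j = f j i) (hdiag : ∀ i, f i i = 0) (N : ℕ) :
    ∑ i ∈ Finset.range N, ∑ j ∈ Finset.range N, f i j =
      2 * ∑ i ∈ Finset.range N, ∑ j ∈ Finset.range i, f i j := by
  induction N with
  | zero => simp
  | succ N ih =>
    simp only [Finset.sum_range_succ, Finset.sum_add_distrib, hdiag, ih]
    rw [Finset.sum_congr rfl fun i _ => hsymm i N]
    ring

lemma sum_sum_abs_sin_eq {N : ℕ} (hN : N ≠ 0) :
    ∑ k ∈ Finset.range N, ∑ j ∈ Finset.range k, |sin (k * (π / N) - j * (π / N))| =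
      N * cot (π / (2 * N)) / 2 := by
  have h := sum_range_sum_range_of_symm (f := fun k j => |sin (k * (π / N) - j * (π / N))|)
    (fun k j => by rw [← abs_neg, ← sin_neg, neg_sub]) (by simp) N
  simp only [sum_abs_sin_nat_mul_eq_cot hN, Finset.sum_const, Finset.card_range,
    nsmul_eq_mul] at h
  linarith

end SineSums

lemma integral_sum_range_add {E : Type*} [NormedAddCommGroup E] [NormedSpace ℝ E] {f : ℝ → E}
    (hf : Continuous f) (c : ℝ) (N : ℕ) :
    ∫ t in 0..c, ∑ k ∈ Finset.range N, f (t + k * c) = ∫ t in 0..N * c, f t := by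
  have hsum := intervalIntegral.sum_integral_adjacent_intervals (f := f) (μ := volume)
    (a := fun k : ℕ => k * c) (n := N) fun k _ => hf.intervalIntegrable _ _
  rw [Nat.cast_zero, zero_mul] at hsum
  rw [← hsum, intervalIntegral.integral_finsetSum
    fun k _ => Continuous.intervalIntegrable (by fun_prop) _ _]
  refine Finset.sum_congr rfl fun k _ => ?_
  rw [intervalIntegral.integral_comp_add_right f (k * c)]
  congr 1 <;> push_cast <;> ring

lemma inner_circleExp_eq (θ : ℝ) (p : ℂ) :
    ⟪(Circle.exp θ : ℂ), p⟫ = p.re * cos θ + p.im * sin θ := by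
  simp [Complex.inner, Complex.exp_ofReal_mul_I_re, Complex.exp_ofReal_mul_I_im]

lemma inner_circleExp_I_mul (a b : ℝ) :
    ⟪(Circle.exp a : ℂ), Complex.I * Circle.exp b⟫ = sin (a - b) := by
  simp only [Complex.inner, sin_sub, Circle.coe_exp, Complex.mul_re, Complex.mul_im,
    Complex.conj_re, Complex.conj_im, Complex.I_re, Complex.I_im, Complex.exp_ofReal_mul_I_re,
    Complex.exp_ofReal_mul_I_im]
  ring

section RegularZonogon

variable {N : ℕ} {r t : ℝ}

/-- The normals to the edges of a regular `2N`-gon of inradius `r`, one for each pair of opposite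
edges; their length is half the length of an edge, and `t` is the direction of the first one. -/
noncomputable def edgeNormal (N : ℕ) (r t : ℝ) (k : ℕ) : ℂ :=
  (r * tan (π / (2 * N))) • (Circle.exp (t + k * (π / N)) : ℂ)

/-- The regular `2N`-gon of inradius `r` with centre `0` and an edge normal in direction `t`, as
the zonotope generated by its half edges. The case `N = 1` is degenerate. -/
noncomputable def regularZonogon (N : ℕ) (r t : ℝ) : Set ℂ :=
  zonotope (Finset.range N) fun k => Complex.I * edgeNormal N r t k

lemma tan_pi_div_two_mul_nat_nonneg (N : ℕ) : 0 ≤ tan (π / (2 * N)) :=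
  tan_nonneg_of_nonneg_of_le_pi_div_two (by positivity) (pi_div_two_mul_nat_le N)

lemma tan_mul_cot_pi_div_two_mul_nat (hN : 2 ≤ N) :
    tan (π / (2 * N)) * cot (π / (2 * N)) = 1 := by
  have hN0 : N ≠ 0 := by lia
  have hNtwo : (2 : ℝ) ≤ N := by exact_mod_cast hN
  have hlt : π / (2 * N) < π / 2 := by
    gcongr
    linarith
  have hcos : 0 < cos (π / (2 * N)) :=
    cos_pos_of_mem_Ioo ⟨by linarith [pi_pos, show 0 ≤ π / (2 * N) by positivity], hlt⟩
  have hsin := sin_pi_div_two_mul_nat_pos hN0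
  rw [tan_eq_sin_div_cos, cot_eq_cos_div_sin]
  field_simp

lemma inner_edgeNormal_I_mul (k j : ℕ) :
    ⟪edgeNormal N r t k, Complex.I * edgeNormal N r t j⟫ =
      (r * tan (π / (2 * N))) ^ 2 * sin (k * (π / N) - j * (π / N)) := by
  rw [edgeNormal, edgeNormal, mul_smul_comm, real_inner_smul_left, real_inner_smul_right,
    inner_circleExp_I_mul, add_sub_add_left_eq_sub]
  ring

lemma closedBall_subset_regularZonogon (hN : 2 ≤ N) (hr : 0 ≤ r) (t : ℝ) :
    Metric.closedBall 0 r ⊆ regularZonogon N r t := by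
  refine closedBall_subset_zonotope fun u => ?_
  have htan := tan_pi_div_two_mul_nat_nonneg N
  have hinner (k : ℕ) : |⟪u, Complex.I * edgeNormal N r t k⟫| =
      ‖u‖ * (r * tan (π / (2 * N))) * |sin (t - u.arg + k * (π / N))| := by
    have hu : u = ‖u‖ • (Circle.exp u.arg : ℂ) := by simp [Complex.norm_mul_exp_arg_mul_I]
    conv_lhs => rw [hu]
    rw [edgeNormal, mul_smul_comm, real_inner_smul_left, real_inner_smul_right,
      inner_circleExp_I_mul, abs_mul, abs_mul, abs_norm, abs_of_nonneg (mul_nonneg hr htan),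
      ← abs_neg (sin _), ← sin_neg, mul_assoc]
    ring_nf
  calc r * ‖u‖ = ‖u‖ * (r * tan (π / (2 * N))) * cot (π / (2 * N)) := by
        linear_combination -(r * ‖u‖) * tan_mul_cot_pi_div_two_mul_nat hN
    _ ≤ ‖u‖ * (r * tan (π / (2 * N))) *
          ∑ k ∈ Finset.range N, |sin (t - u.arg + k * (π / N))| := by
        gcongr
        exact cot_le_sum_abs_sin (by lia) _
    _ = ∑ k ∈ Finset.range N, |⟪u, Complex.I * edgeNormal N r t k⟫| := by
        simp only [hinner, Finset.mul_sum]

lemma volumeReal_add_regularZonogon_le {K : Set ℂ} (hK : IsCompact K) (hKc : Convex ℝ K)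
    (hN : 2 ≤ N) (hr : 0 ≤ r) (t : ℝ) :
    volume.real (K + regularZonogon N r t) ≤ volume.real K +
      2 * N * tan (π / (2 * N)) * r ^ 2 +
      2 * tan (π / (2 * N)) * r *
        ∑ k ∈ Finset.range N, width K (Circle.exp (t + k * (π / N)) : ℂ) := by
  set T := tan (π / (2 * N)) with hT
  have hwidth (k : ℕ) : width K (edgeNormal N r t k) =
      r * T * width K (Circle.exp (t + k * (π / N)) : ℂ) :=
    width_smul (mul_nonneg hr (tan_pi_div_two_mul_nat_nonneg N)) K _
  have hedges : ∑ k ∈ Finset.range N, ∑ j ∈ Finset.range k,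
      |⟪edgeNormal N r t k, Complex.I * edgeNormal N r t j⟫| = N * T * r ^ 2 / 2 := by
    simp only [inner_edgeNormal_I_mul, abs_mul, abs_sq, ← Finset.mul_sum]
    rw [sum_sum_abs_sin_eq (by lia), ← hT]
    linear_combination N * T * r ^ 2 / 2 * tan_mul_cot_pi_div_two_mul_nat hN
  refine (volumeReal_add_zonotope_le hK hKc _ N).trans_eq ?_
  simp only [mul_add, Finset.sum_add_distrib, ← Finset.mul_sum, hedges, hwidth]
  ring

end RegularZonogon

section Steiner

variable {K : Set ℂ} {r : ℝ}

lemma volumeReal_add_closedBall_le_tan_div (hK : IsCompact K) (hKc : Convex ℝ K) (hr : 0 ≤ r)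
    {N : ℕ} (hN : 2 ≤ N) :
    volume.real (K + Metric.closedBall 0 r) ≤ volume.real K +
      tan (π / (2 * N)) / (π / (2 * N)) *
        (r * (∫ θ in 0..π, width K (Circle.exp θ : ℂ)) + π * r ^ 2) := by
  have hNpos : (0 : ℝ) < N := by positivity
  set W : ℝ → ℝ := fun θ => width K (Circle.exp θ : ℂ)
  have hWc : Continuous W := (continuous_width hK).comp (by fun_prop)
  set T := tan (π / (2 * N))
  have hle (t : ℝ) : volume.real (K + Metric.closedBall 0 r) ≤ volume.real K +
      2 * N * T * r ^ 2 + 2 * T * r * ∑ k ∈ Finset.range N, W (t + k * (π / N)) :=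
    (measureReal_mono (add_subset_add_left (closedBall_subset_regularZonogon hN hr t))
      (hK.add (isCompact_zonotope _ _)).measure_ne_top).trans
      (volumeReal_add_regularZonogon_le hK hKc hN hr t)
  have hint := intervalIntegral.integral_mono_on (μ := volume) (a := 0) (b := π / N)
    (by positivity) (by simp) (Continuous.intervalIntegrable (by fun_prop) _ _) fun t _ => hle t
  rw [intervalIntegral.integral_add (by simp) (Continuous.intervalIntegrable (by fun_prop) _ _),
    intervalIntegral.integral_const_mul, integral_sum_range_add hWc,
    mul_div_cancel₀ π hNpos.ne', intervalIntegral.integral_const, intervalIntegral.integral_const,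
    sub_zero, smul_eq_mul, smul_eq_mul] at hint
  refine le_of_mul_le_mul_left (hint.trans_eq ?_) (by positivity : 0 < π / N)
  field_simp
  ring

lemma tendsto_tan_div_self : Filter.Tendsto (fun x => tan x / x) (nhdsWithin 0 {0}ᶜ) (nhds 1) := by
  have h := (hasDerivAt_tan (x := 0) (by simp)).tendsto_slope_zero
  simpa [div_eq_inv_mul] using h

/-- The upper half of Steiner's formula: the integral is the perimeter of `K`, by Cauchy's
formula. -/
lemma volumeReal_add_closedBall_le (hK : IsCompact K) (hKc : Convex ℝ K) (hr : 0 ≤ r) :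
    volume.real (K + Metric.closedBall 0 r) ≤ volume.real K +
      r * (∫ θ in 0..π, width K (Circle.exp θ : ℂ)) + π * r ^ 2 := by
  have hzero : Filter.Tendsto (fun N : ℕ => π / (2 * N)) Filter.atTop (nhds 0) := by
    simpa only [div_div] using tendsto_const_div_atTop_nhds_zero_nat (π / 2)
  have hne : ∀ᶠ N : ℕ in Filter.atTop, π / (2 * N) ∈ ({0}ᶜ : Set ℝ) := by
    filter_upwards [Filter.eventually_ne_atTop 0] with N hN
    simp [hN, pi_ne_zero]
  have hratio := tendsto_tan_div_self.comp (tendsto_nhdsWithin_iff.mpr ⟨hzero, hne⟩)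
  have hlim := (hratio.mul_const
    (r * (∫ θ in 0..π, width K (Circle.exp θ : ℂ)) + π * r ^ 2)).const_add (volume.real K)
  rw [one_mul, ← add_assoc] at hlim
  exact ge_of_tendsto hlim ((Filter.eventually_ge_atTop 2).mono fun N hN =>
    volumeReal_add_closedBall_le_tan_div hK hKc hr hN)

end Steiner

section TruncatedLens

variable {h φ θ : ℝ} {p q : ℂ} {K : Set ℂ}

/-- The intersection of the unit discs about `0` and `1` with the strip `|Im z| ≤ h`. -/
def truncatedLens (h : ℝ) : Set ℂ :=
  {z | ‖z‖ ≤ 1 ∧ ‖z - 1‖ ≤ 1 ∧ |z.im| ≤ h}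

/-- The perimeter of `truncatedLens h` for `0 ≤ h ≤ √3 / 2`: an arc of angle `2 * arcsin h` on
each circle, and two horizontal segments of length `2 * √(1 - h ^ 2) - 1`. -/
noncomputable def truncatedLensPerimeter (h : ℝ) : ℝ :=
  4 * arcsin h + 4 * √(1 - h ^ 2) - 2

lemma convex_truncatedLens (h : ℝ) : Convex ℝ (truncatedLens h) := by
  have heq : truncatedLens h =
      Metric.closedBall 0 1 ∩ (Metric.closedBall 1 1 ∩ Complex.imLm ⁻¹' Icc (-h) h) := by
    ext z
    simp [truncatedLens, dist_eq_norm, abs_le]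
  rw [heq]
  exact (convex_closedBall 0 1).inter
    ((convex_closedBall 1 1).inter ((convex_Icc _ _).linear_preimage Complex.imLm))

lemma conj_mem_truncatedLens (hp : p ∈ truncatedLens h) : conj p ∈ truncatedLens h := by
  obtain ⟨hzero, hone, him⟩ := hp
  refine ⟨by rwa [Complex.norm_conj], ?_, by rwa [Complex.conj_im, abs_neg]⟩
  rwa [← map_one (starRingEnd ℂ), ← map_sub, Complex.norm_conj]

lemma inner_circleExp_le_norm (θ : ℝ) (p : ℂ) : ⟪(Circle.exp θ : ℂ), p⟫ ≤ ‖p‖ := by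
  simpa using real_inner_le_norm (Circle.exp θ : ℂ) p

lemma inner_circleExp_le_cos_sub (hp : ‖p‖ ≤ 1) (him : p.im ≤ sin φ) (hφ : 0 ≤ φ) (hφθ : φ < θ)
    (hθ : θ ≤ π / 2) : ⟪(Circle.exp θ : ℂ), p⟫ ≤ cos (θ - φ) := by
  have hcosφ : 0 < cos φ := cos_pos_of_mem_Ioo ⟨by linarith, by linarith⟩
  have hcosθ : 0 ≤ cos θ := cos_nonneg_of_mem_Icc ⟨by linarith, hθ⟩
  have hsin : 0 ≤ sin (θ - φ) := sin_nonneg_of_nonneg_of_le_pi (by linarith) (by linarith)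
  -- For `φ ≤ θ ≤ π / 2`, the direction `θ` is a nonnegative combination of `φ` and the vertical.
  refine le_of_mul_le_mul_left ?_ hcosφ
  calc cos φ * ⟪(Circle.exp θ : ℂ), p⟫
      = cos θ * ⟪(Circle.exp φ : ℂ), p⟫ + sin (θ - φ) * p.im := by
        rw [inner_circleExp_eq, inner_circleExp_eq, sin_sub]
        ring
    _ ≤ cos θ * 1 + sin (θ - φ) * sin φ := by
        gcongr
        exact (inner_circleExp_le_norm φ p).trans hp
    _ = cos φ * cos (θ - φ) := by
        rw [sin_sub, cos_sub]
        linear_combination -cos θ * sin_sq_add_cos_sq φ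

lemma inner_circleExp_le_cos_max (hp : ‖p‖ ≤ 1) (him : p.im ≤ sin φ) (hφ : 0 ≤ φ)
    (hθ : θ ≤ π / 2) : ⟪(Circle.exp θ : ℂ), p⟫ ≤ cos (max (θ - φ) 0) := by
  rcases le_or_gt θ φ with hle | hlt
  · rw [max_eq_right (sub_nonpos.mpr hle), cos_zero]
    exact (inner_circleExp_le_norm θ p).trans hp
  · rw [max_eq_left (sub_pos.mpr hlt).le]
    exact inner_circleExp_le_cos_sub hp him hφ hlt hθ

lemma inner_circleExp_sub_le (hp : p ∈ truncatedLens (sin φ)) (hq : q ∈ truncatedLens (sin φ))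
    (hφ : 0 ≤ φ) (hθ : θ ≤ π / 2) :
    ⟪(Circle.exp θ : ℂ), p - q⟫ ≤ 2 * cos (max (θ - φ) 0) - cos θ := by
  -- Both `p` and `1 - q` lie in the unit disc, below the height `sin φ`.
  have hp' := inner_circleExp_le_cos_max hp.1 ((le_abs_self _).trans hp.2.2) hφ hθ
  have hq' : ⟪(Circle.exp θ : ℂ), 1 - q⟫ ≤ cos (max (θ - φ) 0) := by
    refine inner_circleExp_le_cos_max (by rw [norm_sub_rev]; exact hq.2.1) ?_ hφ hθ
    simpa using (neg_le_abs _).trans hq.2.2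
  have hone : ⟪(Circle.exp θ : ℂ), 1⟫ = cos θ := by simp
  rw [inner_sub_right] at hq' ⊢
  linarith

lemma inner_circleExp_pi_sub (θ : ℝ) (p : ℂ) :
    ⟪(Circle.exp (π - θ) : ℂ), p⟫ = ⟪(Circle.exp θ : ℂ), -conj p⟫ := by
  rw [inner_circleExp_eq, inner_circleExp_eq, cos_pi_sub, sin_pi_sub]
  simp

lemma two_mul_cos_max_sub_cos_nonneg (hφ : 0 ≤ φ) (hθ : θ ∈ Icc 0 (π / 2)) :
    0 ≤ 2 * cos (max (θ - φ) 0) - cos θ := by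
  have hcos : 0 ≤ cos θ := cos_nonneg_of_mem_Icc ⟨by linarith [hθ.1, pi_pos], hθ.2⟩
  have hle : cos θ ≤ cos (max (θ - φ) 0) :=
    cos_le_cos_of_nonneg_of_le_pi (le_max_right _ _) (by linarith [hθ.2, pi_pos])
      (max_le (by linarith) hθ.1)
  linarith

lemma width_circleExp_le (hK : K ⊆ truncatedLens (sin φ)) (hφ : 0 ≤ φ) (hθ : θ ∈ Icc 0 (π / 2)) :
    width K (Circle.exp θ : ℂ) ≤ 2 * cos (max (θ - φ) 0) - cos θ :=
  width_le (two_mul_cos_max_sub_cos_nonneg hφ hθ) fun _ hp _ hq =>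
    inner_circleExp_sub_le (hK hp) (hK hq) hφ hθ.2

lemma width_circleExp_pi_sub_le (hK : K ⊆ truncatedLens (sin φ)) (hφ : 0 ≤ φ)
    (hθ : θ ∈ Icc 0 (π / 2)) :
    width K (Circle.exp (π - θ) : ℂ) ≤ 2 * cos (max (θ - φ) 0) - cos θ := by
  refine width_le (two_mul_cos_max_sub_cos_nonneg hφ hθ) fun p hp q hq => ?_
  rw [inner_circleExp_pi_sub, map_sub, neg_sub]
  exact inner_circleExp_sub_le (conj_mem_truncatedLens (hK hq)) (conj_mem_truncatedLens (hK hp))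
    hφ hθ.2

lemma integral_two_mul_cos_max_sub_cos (hφ : φ ∈ Icc 0 (π / 2)) :
    ∫ θ in 0..π / 2, (2 * cos (max (θ - φ) 0) - cos θ) = 2 * φ + 2 * cos φ - 1 := by
  have hcont : Continuous fun θ => cos (max (θ - φ) 0) := by fun_prop
  have hleft : ∫ θ in 0..φ, cos (max (θ - φ) 0) = φ := by
    rw [intervalIntegral.integral_congr (g := fun _ => 1)]
    · simp
    · intro θ hθ
      rw [uIcc_of_le hφ.1] at hθ
      simp [hθ.2]
  have hright : ∫ θ in φ..π / 2, cos (max (θ - φ) 0) = cos φ := by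
    rw [intervalIntegral.integral_congr (g := fun θ => cos (θ - φ))]
    · simp [intervalIntegral.integral_comp_sub_right cos φ, sin_pi_div_two_sub]
    · intro θ hθ
      rw [uIcc_of_le hφ.2] at hθ
      simp [hθ.1]
  rw [intervalIntegral.integral_sub ((hcont.const_mul 2).intervalIntegrable _ _)
    (continuous_cos.intervalIntegrable _ _), intervalIntegral.integral_const_mul,
    ← intervalIntegral.integral_add_adjacent_intervals (hcont.intervalIntegrable 0 φ)
      (hcont.intervalIntegrable _ _), hleft, hright, integral_cos,
    sin_pi_div_two, sin_zero]
  ring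

lemma integral_width_le_truncatedLensPerimeter (hKc : IsCompact K) (hK : K ⊆ truncatedLens h)
    (hh : h ∈ Icc 0 1) :
    ∫ θ in 0..π, width K (Circle.exp θ : ℂ) ≤ truncatedLensPerimeter h := by
  obtain ⟨φ, hφ, rfl⟩ : ∃ φ ∈ Icc 0 (π / 2), sin φ = h :=
    ⟨arcsin h, ⟨arcsin_nonneg.mpr hh.1, arcsin_le_pi_div_two h⟩,
      sin_arcsin (by linarith [hh.1]) hh.2⟩
  set W : ℝ → ℝ := fun θ => width K (Circle.exp θ : ℂ)
  have hW : Continuous W := (continuous_width hKc).comp (by fun_prop)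
  have hbound : ∫ θ in 0..π / 2, (W θ + W (π - θ)) ≤
      ∫ θ in 0..π / 2, 2 * (2 * cos (max (θ - φ) 0) - cos θ) := by
    refine intervalIntegral.integral_mono_on pi_div_two_pos.le
      (Continuous.intervalIntegrable (by fun_prop) _ _)
      (Continuous.intervalIntegrable (by fun_prop) _ _) fun θ hθ => ?_
    linarith [width_circleExp_le hK hφ.1 hθ, width_circleExp_pi_sub_le hK hφ.1 hθ]
  have hreflect : ∫ θ in 0..π / 2, W (π - θ) = ∫ θ in π / 2..π, W θ := by
    rw [intervalIntegral.integral_comp_sub_left W π]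
    ring_nf
  rw [intervalIntegral.integral_add (hW.intervalIntegrable _ _)
    (Continuous.intervalIntegrable (by fun_prop) _ _), hreflect,
    intervalIntegral.integral_add_adjacent_intervals (hW.intervalIntegrable _ _)
      (hW.intervalIntegrable _ _), intervalIntegral.integral_const_mul,
    integral_two_mul_cos_max_sub_cos hφ] at hbound
  have hpos := pi_pos
  rw [truncatedLensPerimeter, arcsin_sin (by linarith [hφ.1]) hφ.2,
    ← cos_eq_sqrt_one_sub_sin_sq (by linarith [hφ.1]) hφ.2]
  linarith

lemma le_sin_0478 : 0.46 ≤ sin 0.478 := by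
  set s := sin (0.478 / 3)
  have hlower : 0.158659 ≤ s := le_trans (by norm_num) (sin_ge_sub_cube (by norm_num))
  have hupper : s ≤ 0.16 := (sin_le (by norm_num)).trans (by norm_num)
  calc (0.46 : ℝ) ≤ 3 * 0.158659 - 4 * 0.158659 ^ 3 := by norm_num
    _ ≤ 3 * s - 4 * s ^ 3 := by
      nlinarith [mul_nonneg (sub_nonneg.mpr hlower) (sub_nonneg.mpr hupper)]
    _ = sin 0.478 := by
      rw [← sin_three_mul]
      norm_num

lemma arcsin_046_le : arcsin 0.46 ≤ 0.478 := by
  have hpi := pi_gt_three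
  exact (arcsin_le_iff_le_sin ⟨by norm_num, by norm_num⟩ ⟨by linarith, by linarith⟩).mpr
    le_sin_0478

lemma truncatedLensPerimeter_046_le : truncatedLensPerimeter 0.46 ≤ 3.4637 := by
  have hsqrt : √(1 - 0.46 ^ 2) ≤ 0.88792 := sqrt_le_iff.mpr ⟨by norm_num, by norm_num⟩
  rw [truncatedLensPerimeter]
  linarith [arcsin_046_le]

end TruncatedLens

lemma convexHull_subset_convexHull_add_closedBall {E : Type*} [NormedAddCommGroup E]
    [NormedSpace ℝ E] {s t : Set E} {r : ℝ} (h : ∀ q ∈ t, ∃ p ∈ s, dist q p ≤ r) :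
    convexHull ℝ t ⊆ convexHull ℝ s + Metric.closedBall 0 r := by
  rw [← (convex_closedBall (0 : E) r).convexHull_eq, ← convexHull_add]
  refine convexHull_mono fun q hq => ?_
  obtain ⟨p, hp, hqp⟩ := h q hq
  exact ⟨p, hp, q - p, by rwa [mem_closedBall_zero_iff, ← dist_eq_norm], by simp⟩

lemma volumeReal_convexHull_le {s t : Set ℂ} {h r : ℝ} (hs : s.Finite)
    (hlens : s ⊆ truncatedLens h) (hh : h ∈ Icc 0 1) (hr : 0 ≤ r)
    (hst : ∀ q ∈ t, ∃ p ∈ s, dist q p ≤ r) :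
    volume.real (convexHull ℝ t) ≤
      volume.real (convexHull ℝ s) + truncatedLensPerimeter h * r + π * r ^ 2 := by
  have hcompact : IsCompact (convexHull ℝ s) := hs.isCompact_convexHull ℝ
  have hwidth := integral_width_le_truncatedLensPerimeter hcompact
    (convexHull_min hlens (convex_truncatedLens h)) hh
  calc volume.real (convexHull ℝ t)
      ≤ volume.real (convexHull ℝ s + Metric.closedBall 0 r) :=
        measureReal_mono (convexHull_subset_convexHull_add_closedBall hst)
          (hcompact.add (isCompact_closedBall 0 r)).measure_ne_top
    _ ≤ volume.real (convexHull ℝ s) +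
          r * (∫ θ in 0..π, width (convexHull ℝ s) (Circle.exp θ : ℂ)) + π * r ^ 2 :=
        volumeReal_add_closedBall_le hcompact (convex_convexHull ℝ s) hr
    _ ≤ volume.real (convexHull ℝ s) + truncatedLensPerimeter h * r + π * r ^ 2 := by
        rw [mul_comm r]
        gcongr

section Configuration

/-- The isometry identifying the plane with `ℂ`; it sends `E` to `0` and `F` to `1`. -/
noncomputable def toComplex : EuclideanSpace ℝ (Fin 2) ≃ₗᵢ[ℝ] ℂ :=
  Complex.orthonormalBasisOneI.repr.symm

lemma toComplex_apply (p : EuclideanSpace ℝ (Fin 2)) : toComplex p = p 0 + p 1 * Complex.I := by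
  simp [toComplex, Complex.orthonormalBasisOneI_repr_symm_apply]

lemma toComplex_pt (x y : ℝ) : toComplex (pt x y) = x + y * Complex.I := by
  simp [toComplex_apply, pt]

lemma toComplex_mem_truncatedLens {h : ℝ} {p : EuclideanSpace ℝ (Fin 2)}
    (hE : dist p (pt 0 0) ≤ 1) (hF : dist p (pt 1 0) ≤ 1) (him : p 1 ∈ Icc (-h) h) :
    toComplex p ∈ truncatedLens h := by
  rw [← toComplex.dist_map, toComplex_pt, dist_eq_norm] at hE hF
  exact ⟨by simpa using hE, by simpa using hF, by simpa [toComplex_apply, abs_le] using him⟩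

lemma dist_pt_add_polar_le {r : ℝ} (hr : 0 ≤ r) (x y u v ψ θ : ℝ) :
    dist (pt (x + u + r * cos (ψ + θ)) (y + v + r * sin (ψ + θ)))
      (pt (x + r * cos ψ) (y + r * sin ψ)) ≤ ‖(u + v * Complex.I : ℂ)‖ + 2 * r * |sin (θ / 2)| := by
  have hsplit : toComplex (pt (x + u + r * cos (ψ + θ)) (y + v + r * sin (ψ + θ))) -
      toComplex (pt (x + r * cos ψ) (y + r * sin ψ)) =
      (u + v * Complex.I) +
        r * (Complex.exp (ψ * Complex.I) * (Complex.exp (Complex.I * θ) - 1)) := by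
    rw [toComplex_pt, toComplex_pt, mul_sub, mul_one, ← Complex.exp_add, mul_comm Complex.I,
      ← add_mul, Complex.exp_mul_I, Complex.exp_mul_I]
    push_cast
    ring
  rw [← toComplex.dist_map, dist_eq_norm, hsplit]
  refine (norm_add_le _ _).trans_eq ?_
  rw [norm_mul, norm_mul, Complex.norm_exp_ofReal_mul_I, Complex.norm_exp_I_mul_ofReal_sub_one,
    norm_mul, Complex.norm_of_nonneg hr, norm_two, norm_eq_abs]
  ring

lemma abs_sin_half_le {θ d : ℝ} (hθ : |θ| ≤ d / 2) (hd : d ≤ 2 * π) :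
    |sin (θ / 2)| ≤ sin (d / 4) := by
  have habs : |θ / 2| = |θ| / 2 := by rw [abs_div, abs_two]
  rw [abs_sin_eq_sin_abs_of_abs_le_pi (by linarith [pi_pos])]
  exact sin_le_sin_of_le_of_le_pi_div_two (by linarith [abs_nonneg (θ / 2), pi_pos])
    (by linarith) (by linarith)

lemma norm_add_mul_I_le {u v d : ℝ} (hu : |u| ≤ d / 2) (hv : |v| ≤ d / 2) :
    ‖(u + v * Complex.I : ℂ)‖ ≤ d / √2 := by
  calc ‖(u + v * Complex.I : ℂ)‖ ≤ √2 * max |u| |v| := by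
        simpa using Complex.norm_le_sqrt_two_mul_max (u + v * Complex.I)
    _ ≤ √2 * (d / 2) := by
        gcongr
        exact max_le hu hv
    _ = d / √2 := by
        rw [eq_div_iff (by positivity)]
        linear_combination d / 2 * sq_sqrt (zero_le_two (α := ℝ))

variable {d1 d2 : ℝ}

lemma dist_vertex_le {r : ℝ} (hr : 0 ≤ r) (hr' : r ≤ √3 / 6) (hd2 : d2 ≤ 2 * π) (x y ψ c : ℝ)
    {u v θ : ℝ} (hu : |u| ≤ d1 / 2) (hv : |v| ≤ d1 / 2) (hθ : |θ| ≤ d2 / 2) :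
    dist (pt (x + u + r * cos (ψ + θ + c)) (y + v + r * sin (ψ + θ + c)))
      (pt (x + r * cos (ψ + c)) (y + r * sin (ψ + c))) ≤ d1 / √2 + sin (d2 / 4) / √3 := by
  have hthree : (√3 : ℝ) / 3 = 1 / √3 := sqrt_div_self'
  rw [add_right_comm ψ]
  calc dist _ _ ≤ ‖(u + v * Complex.I : ℂ)‖ + 2 * r * |sin (θ / 2)| :=
        dist_pt_add_polar_le hr x y u v (ψ + c) θ
    _ ≤ d1 / √2 + 2 * (√3 / 6) * sin (d2 / 4) := by
        gcongr
        · exact norm_add_mul_I_le hu hv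
        · exact abs_sin_half_le hθ hd2
    _ = d1 / √2 + sin (d2 / 4) / √3 := by
        linear_combination sin (d2 / 4) * hthree

lemma finite_config (x1 y1 a x2 y2 b : ℝ) : (config x1 y1 a x2 y2 b).Finite :=
  ((toFinite _).union (finite_range _)).union (finite_range _)

lemma exists_mem_config_dist_le {x1 y1 a x2 y2 b δ1 δ2 δ3 δ4 θ1 θ2 : ℝ} (hd2 : d2 ≤ 2 * π)
    (h1 : |δ1| ≤ d1 / 2) (h2 : |δ2| ≤ d1 / 2) (h3 : |δ3| ≤ d1 / 2)
    (h4 : |δ4| ≤ d1 / 2) (h5 : |θ1| ≤ d2 / 2) (h6 : |θ2| ≤ d2 / 2) :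
    ∀ q ∈ config (x1 + δ1) (y1 + δ2) (a + θ1) (x2 + δ3) (y2 + δ4) (b + θ2),
      ∃ p ∈ config x1 y1 a x2 y2 b, dist q p ≤ d1 / √2 + sin (d2 / 4) / √3 := by
  have hnonneg : 0 ≤ d1 / √2 + sin (d2 / 4) / √3 :=
    dist_nonneg.trans (dist_vertex_le le_rfl (by positivity) hd2 0 0 0 0 h1 h2 h5)
  rintro q ((hq | ⟨k, rfl⟩) | ⟨k, rfl⟩)
  · exact ⟨q, .inl (.inl hq), by rwa [dist_self]⟩
  · refine ⟨sqVertex x1 y1 a k, .inl (.inr ⟨k, rfl⟩), ?_⟩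
    exact dist_vertex_le (by positivity) (by gcongr; norm_num) hd2 x1 y1 a _ h1 h2 h5
  · refine ⟨triVertex x2 y2 b k, .inr ⟨k, rfl⟩, ?_⟩
    exact dist_vertex_le (by positivity) le_rfl hd2 x2 y2 b _ h3 h4 h6

lemma area_eq_volumeReal_convexHull_toComplex (x1 y1 a x2 y2 b : ℝ) :
    area x1 y1 a x2 y2 b =
      volume.real (convexHull ℝ (toComplex '' config x1 y1 a x2 y2 b)) := by
  rw [area, measureReal_def]
  congr 1
  rw [← volume_image_linearIsometryEquiv toComplex]
  congr 1
  exact toComplex.toLinearEquiv.toLinearMap.image_convexHull _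

end Configuration

theorem lipschitz_perturbation_bound (d1 d2 δ : ℝ) (hd1 : 0 ≤ d1)
    (hd2 : 0 ≤ d2) (hd2' : d2 ≤ 2 * Real.pi)
    (hδ : δ = d1 / Real.sqrt 2 + Real.sin (d2 / 4) / Real.sqrt 3)
    (x1 y1 a x2 y2 b : ℝ)
    (hconf : ∀ p ∈ config x1 y1 a x2 y2 b,
      dist p (pt 0 0) ≤ 1 ∧ dist p (pt 1 0) ≤ 1 ∧ p 1 ∈ Set.Icc (-0.46 : ℝ) 0.46)
    (δ1 δ2 δ3 δ4 θ1 θ2 : ℝ)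
    (h1 : |δ1| ≤ d1 / 2) (h2 : |δ2| ≤ d1 / 2) (h3 : |δ3| ≤ d1 / 2)
    (h4 : |δ4| ≤ d1 / 2) (h5 : |θ1| ≤ d2 / 2) (h6 : |θ2| ≤ d2 / 2) :
    area (x1 + δ1) (y1 + δ2) (a + θ1) (x2 + δ3) (y2 + δ4) (b + θ2) ≤
      area x1 y1 a x2 y2 b + 3.4637 * δ + Real.pi * δ ^ 2 := by
  have hsin : 0 ≤ sin (d2 / 4) := sin_nonneg_of_nonneg_of_le_pi (by linarith) (by linarith)
  have hδ0 : 0 ≤ δ := by rw [hδ]; positivity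
  rw [area_eq_volumeReal_convexHull_toComplex, area_eq_volumeReal_convexHull_toComplex]
  have hlens : toComplex '' config x1 y1 a x2 y2 b ⊆ truncatedLens 0.46 := by
    rintro _ ⟨p, hp, rfl⟩
    obtain ⟨hE, hF, him⟩ := hconf p hp
    exact toComplex_mem_truncatedLens hE hF him
  refine (volumeReal_convexHull_le ((finite_config x1 y1 a x2 y2 b).image _) hlens
    ⟨by norm_num, by norm_num⟩ hδ0 ?_).trans ?_
  · rintro _ ⟨q, hq, rfl⟩
    obtain ⟨p, hp, hqp⟩ := exists_mem_config_dist_le hd2' h1 h2 h3 h4 h5 h6 q hq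
    exact ⟨toComplex p, mem_image_of_mem _ hp, by rwa [toComplex.dist_map, hδ]⟩
  · gcongr
    exact truncatedLensPerimeter_046_le
end

section
/- For all real α, β with π/4 ≤ α ≤ 78π/180 and 83π/180 ≤ β ≤ 97π/180, the maximum of the four quantities (1/6)·((1/2)·cos(α − β + π/12) + cos(α − π/4)), (√2/6)·sin α, (1/4)·sin(β − π/6), and (1/4)·sin(β + π/6) is at least 0.227498. -/
/-!
Put `x = a - π / 4` and `y = b - π / 2`, and scale the four quantities by `6`. The second becomes
`cos x + sin x`, the larger of the last two becomes `(3 / 2) * cos (|y| - π / 6)`, and the first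
becomes `cos x + (1 / 2) * cos (x - y - π / 6)`. The second is large once `x` exceeds a critical
value, and the larger of the last two is large once `|y|` exceeds a critical value. On the remaining
rectangle the first is smallest along the edge where `y` is maximal; there it is a concave function
of `x`, so it is smallest at a corner. At the corner where `x` and `y` are both critical the three
expressions almost coincide, which is where the constant comes from.
-/

open Real Set

theorem cos_le_cos_of_abs_le {u v : ℝ} (huv : |u| ≤ v) (hv : v ≤ π) : cos v ≤ cos u := by
  rw [← cos_abs u]
  exact cos_le_cos_of_nonneg_of_le_pi (abs_nonneg u) hv huv

theorem cos_abs_sub_le_max_sin (b φ : ℝ) :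
    cos (|b - π / 2| - φ) ≤ max (sin (b - φ)) (sin (b + φ)) := by
  rcases abs_cases (b - π / 2) with ⟨h, -⟩ | ⟨h, -⟩ <;> rw [h]
  · refine le_max_of_le_left (le_of_eq ?_)
    rw [← cos_sub_pi_div_two]
    ring_nf
  · refine le_max_of_le_right (le_of_eq ?_)
    rw [← cos_pi_div_two_sub]
    ring_nf

theorem sqrt_two_mul_cos_pi_div_four_sub (x : ℝ) : √2 * cos (π / 4 - x) = cos x + sin x := by
  have h : √2 * √2 = 2 := mul_self_sqrt zero_le_two
  rw [cos_sub, cos_pi_div_four, sin_pi_div_four]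
  linear_combination (cos x + sin x) / 2 * h

theorem concaveOn_cos_sub (θ : ℝ) :
    ConcaveOn ℝ (Icc (θ - π / 2) (θ + π / 2)) fun x => cos (x - θ) := by
  simpa [Function.comp_def, neg_add_eq_sub, sub_eq_neg_add, add_comm] using
    strictConcaveOn_cos_Icc.concaveOn.translate_right (-θ)

theorem min_le_cos_add_mul_cos_sub {m θ x x₀ : ℝ} (hm : 0 ≤ m) (hθ : θ ∈ Icc 0 (π / 2))
    (hx : x ∈ Icc 0 x₀) (hx₀ : x₀ ≤ π / 2) :
    min (1 + m * cos θ) (cos x₀ + m * cos (x₀ - θ)) ≤ cos x + m * cos (x - θ) := by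
  have hcos : ConcaveOn ℝ (Icc 0 (π / 2)) cos :=
    strictConcaveOn_cos_Icc.concaveOn.subset
      (Icc_subset_Icc_left (by linarith [pi_pos])) (convex_Icc _ _)
  have hshift : ConcaveOn ℝ (Icc 0 (π / 2)) fun x => cos (x - θ) :=
    (concaveOn_cos_sub θ).subset
      (Icc_subset_Icc (by linarith [hθ.2]) (by linarith [hθ.1])) (convex_Icc _ _)
  have hsum := hcos.add (hshift.smul hm)
  have h₀ : 0 ≤ x₀ := hx.1.trans hx.2
  simpa using hsum.min_le_of_mem_Icc ⟨le_rfl, h₀.trans hx₀⟩ ⟨h₀, hx₀⟩ hx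

theorem min_le_cos_add_mul_cos_sub_sub {m φ x x₀ y y₀ : ℝ} (hm : 0 ≤ m) (hx : x ∈ Icc 0 x₀)
    (hx₀ : x₀ ≤ φ) (hy : |y| ≤ y₀) (hφ : φ + y₀ ≤ π / 2) :
    min (1 + m * cos (φ + y₀)) (cos x₀ + m * cos (x₀ - (φ + y₀))) ≤
      cos x + m * cos (x - y - φ) := by
  obtain ⟨hx_nonneg, hx_le⟩ := hx
  have hy₀ : 0 ≤ y₀ := (abs_nonneg y).trans hy
  obtain ⟨hy_lower, hy_upper⟩ := abs_le.1 hy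
  have hedge : cos (x - (φ + y₀)) ≤ cos (x - y - φ) := by
    rw [← cos_neg (x - (φ + y₀))]
    exact cos_le_cos_of_abs_le (abs_le.2 ⟨by linarith, by linarith⟩) (by linarith [pi_pos])
  calc
    _ ≤ cos x + m * cos (x - (φ + y₀)) :=
      min_le_cos_add_mul_cos_sub hm ⟨by linarith, hφ⟩ ⟨hx_nonneg, hx_le⟩ (by linarith)
    _ ≤ _ := by gcongr

theorem arcsin_le_pi_div_six {s : ℝ} (hs : s ≤ 1 / 2) : arcsin s ≤ π / 6 := by
  rw [arcsin_le_iff_le_sin' ⟨by linarith [pi_pos], by linarith [pi_pos]⟩, sin_pi_div_six]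
  exact hs

theorem le_cos_arcsin {s c : ℝ} (h : s ^ 2 + c ^ 2 ≤ 1) : c ≤ cos (arcsin s) := by
  rw [cos_arcsin]
  exact le_sqrt_of_sq_le (by linarith)

/-- The critical value of `x = a - π / 4`, at which `√2 / 6 * sin a` reaches `0.227498`. The
sine of the exact threshold is rounded up to six decimals. -/
noncomputable def criticalX : ℝ := arcsin 0.497557

/-- The critical value of `|y| = |b - π / 2|`, at which `1 / 4 * cos (|y| - π / 6)` reaches
`0.227498`. The sine of the exact threshold is rounded up to five decimals. -/
noncomputable def criticalY : ℝ := arcsin 0.09592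

theorem sin_criticalX : sin criticalX = 0.497557 := sin_arcsin (by norm_num) (by norm_num)

theorem sin_criticalY : sin criticalY = 0.09592 := sin_arcsin (by norm_num) (by norm_num)

theorem le_cos_criticalX : 0.8674312 ≤ cos criticalX := le_cos_arcsin (by norm_num)

theorem le_cos_criticalY : 0.995389 ≤ cos criticalY := le_cos_arcsin (by norm_num)

theorem criticalX_nonneg : 0 ≤ criticalX := arcsin_nonneg.2 (by norm_num)

theorem criticalX_le_pi_div_six : criticalX ≤ π / 6 := arcsin_le_pi_div_six (by norm_num)

theorem criticalY_nonneg : 0 ≤ criticalY := arcsin_nonneg.2 (by norm_num)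

theorem criticalY_le_pi_div_six : criticalY ≤ π / 6 := arcsin_le_pi_div_six (by norm_num)

theorem le_sqrt_three : 1.7320508 ≤ √3 := le_sqrt_of_sq_le (by norm_num)

theorem le_sqrt_three_mul_cos_criticalY : 1.724064 ≤ √3 * cos criticalY :=
  calc
    (1.724064 : ℝ) ≤ 1.7320508 * 0.995389 := by norm_num
    _ ≤ √3 * cos criticalY :=
      mul_le_mul le_sqrt_three le_cos_criticalY (by norm_num) (sqrt_nonneg 3)

theorem le_cos_criticalX_add_sin_criticalX : 1.364988 ≤ cos criticalX + sin criticalX := by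
  linarith [le_cos_criticalX, sin_criticalX]

theorem le_cos_criticalY_sub_pi_div_six : 0.909992 ≤ cos (criticalY - π / 6) := by
  rw [cos_sub, cos_pi_div_six, sin_pi_div_six]
  linarith [le_sqrt_three_mul_cos_criticalY, sin_criticalY]

theorem le_cos_pi_div_six_add_criticalY : 0.814072 ≤ cos (π / 6 + criticalY) := by
  rw [cos_add, cos_pi_div_six, sin_pi_div_six]
  linarith [le_sqrt_three_mul_cos_criticalY, sin_criticalY]

theorem le_sin_pi_div_six_add_criticalY : 0.5807636 ≤ sin (π / 6 + criticalY) := by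
  rw [sin_add, cos_pi_div_six, sin_pi_div_six, sin_criticalY]
  linarith [le_cos_criticalY, le_sqrt_three]

theorem le_cos_criticalX_add_half_mul_cos :
    1.364988 ≤ cos criticalX + 1 / 2 * cos (criticalX - (π / 6 + criticalY)) := by
  have hcos : 0.8674312 * 0.814072 ≤ cos criticalX * cos (π / 6 + criticalY) :=
    mul_le_mul le_cos_criticalX le_cos_pi_div_six_add_criticalY (by norm_num)
      (le_trans (by norm_num) le_cos_criticalX)
  rw [cos_sub, sin_criticalX]
  linarith [le_cos_criticalX, le_sin_pi_div_six_add_criticalY]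

theorem le_sqrt_two_div_six_mul_sin {a : ℝ}
    (ha : a ∈ Icc (π / 4 + criticalX) (3 * π / 4 - criticalX)) :
    0.227498 ≤ √2 / 6 * sin a := by
  obtain ⟨ha_lower, ha_upper⟩ := ha
  have hsin : cos (π / 4 - criticalX) ≤ sin a := by
    rw [← cos_sub_pi_div_two]
    refine cos_le_cos_of_abs_le (abs_le.2 ⟨by linarith, by linarith⟩) ?_
    linarith [pi_pos, criticalX_nonneg]
  calc
    0.227498 ≤ (cos criticalX + sin criticalX) / 6 := by
      linarith [le_cos_criticalX_add_sin_criticalX]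
    _ = √2 / 6 * cos (π / 4 - criticalX) := by
      rw [← sqrt_two_mul_cos_pi_div_four_sub]
      ring
    _ ≤ √2 / 6 * sin a := by gcongr

theorem le_max_quarter_mul_sin {b : ℝ}
    (hb : |b - π / 2| ∈ Icc criticalY (π / 3 - criticalY)) :
    0.227498 ≤ max (1 / 4 * sin (b - π / 6)) (1 / 4 * sin (b + π / 6)) := by
  obtain ⟨hb_lower, hb_upper⟩ := hb
  have hcos : cos (criticalY - π / 6) ≤ cos (|b - π / 2| - π / 6) := by
    rw [← cos_neg (criticalY - π / 6)]
    exact cos_le_cos_of_abs_le (abs_le.2 ⟨by linarith, by linarith⟩)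
      (by linarith [pi_pos, criticalY_nonneg])
  rw [← mul_max_of_nonneg _ _ (by norm_num : (0 : ℝ) ≤ 1 / 4)]
  linarith [le_cos_criticalY_sub_pi_div_six, cos_abs_sub_le_max_sin b (π / 6)]

theorem le_sixth_mul_half_mul_cos_add_cos {a b : ℝ} (ha : a ∈ Icc (π / 4) (π / 4 + criticalX))
    (hb : |b - π / 2| ≤ criticalY) :
    0.227498 ≤ 1 / 6 * (1 / 2 * cos (a - b + π / 12) + cos (a - π / 4)) := by
  have hcorner := min_le_cos_add_mul_cos_sub_sub (x := a - π / 4) one_half_pos.le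
    ⟨by linarith [ha.1], by linarith [ha.2]⟩ criticalX_le_pi_div_six hb
    (by linarith [criticalY_le_pi_div_six, pi_pos])
  have hmin : 1.364988 ≤ min (1 + 1 / 2 * cos (π / 6 + criticalY))
      (cos criticalX + 1 / 2 * cos (criticalX - (π / 6 + criticalY))) :=
    le_min (by linarith [le_cos_pi_div_six_add_criticalY]) le_cos_criticalX_add_half_mul_cos
  rw [show a - b + π / 12 = a - π / 4 - (b - π / 2) - π / 6 by ring]
  linarith

theorem p_lower_bound_general {a b : ℝ} (ha : a ∈ Icc (π / 4) (7 * π / 12))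
    (hb : b ∈ Icc (π / 3) (2 * π / 3)) :
    max (max (1 / 6 * (1 / 2 * cos (a - b + π / 12) + cos (a - π / 4))) (√2 / 6 * sin a))
      (max (1 / 4 * sin (b - π / 6)) (1 / 4 * sin (b + π / 6))) ≥ 0.227498 := by
  rcases le_total criticalY |b - π / 2| with hb_far | hb_near
  · have hb_le : |b - π / 2| ≤ π / 6 := abs_le.2 ⟨by linarith [hb.1], by linarith [hb.2]⟩
    exact le_max_of_le_right
      (le_max_quarter_mul_sin ⟨hb_far, by linarith [criticalY_le_pi_div_six]⟩)
  refine le_max_of_le_left ?_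
  rcases le_total a (π / 4 + criticalX) with ha_near | ha_far
  · exact le_max_of_le_left (le_sixth_mul_half_mul_cos_add_cos ⟨ha.1, ha_near⟩ hb_near)
  · exact le_max_of_le_right
      (le_sqrt_two_div_six_mul_sin ⟨ha_far, by linarith [ha.2, criticalX_le_pi_div_six]⟩)

theorem p_lower_bound (a b : ℝ) (h1 : Real.pi / 4 ≤ a) (h2 : a ≤ 78 * Real.pi / 180)
    (h3 : 83 * Real.pi / 180 ≤ b) (h4 : b ≤ 97 * Real.pi / 180) :
    max (max (1 / 6 * (1 / 2 * Real.cos (a - b + Real.pi / 12) + Real.cos (a - Real.pi / 4)))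
        (Real.sqrt 2 / 6 * Real.sin a))
      (max (1 / 4 * Real.sin (b - Real.pi / 6)) (1 / 4 * Real.sin (b + Real.pi / 6))) ≥
      0.227498 :=
  p_lower_bound_general ⟨h1, by linarith [pi_pos]⟩ ⟨by linarith [pi_pos], by linarith [pi_pos]⟩
end
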